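/- arXiv:math/0012029 — 5 statements merged into one kernel-verified Lean document; each statement's English description precedes it below -/
import Mathlib

section
/- For each ordered pair (α,β) in {(123,132), (123,213), (132,123), (213,123), (231,321), (312,321), (321,231), (321,312)} of patterns of length three, and for every n ≥ 3, the number of permutations of {1,…,n} that avoid α and contain β exactly once is s_n(α;β) = (n−2)·2^{n−3}. -/
/-- Number of occurrences of the pattern `α ∈ S_k` in the permutation `π ∈ S_n`:
the number of strictly increasing choices of `k` indices such that the corresponding
subword of `π` is order-isomorphic to `α`. -/
noncomputable def occCount {k n : ℕ} (α : Equiv.Perm (Fin k)) (π : Equiv.Perm (Fin n)) : ℕ :=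
  Nat.card {f : Fin k → Fin n // StrictMono f ∧ ∀ a b : Fin k, α a < α b ↔ π (f a) < π (f b)}

/-- `π` avoids the pattern `α`. -/
def avoids {k n : ℕ} (α : Equiv.Perm (Fin k)) (π : Equiv.Perm (Fin n)) : Prop :=
  occCount α π = 0

/-- `π` contains the pattern `α` exactly once. -/
def containsOnce {k n : ℕ} (α : Equiv.Perm (Fin k)) (π : Equiv.Perm (Fin n)) : Prop :=
  occCount α π = 1

/-- The pattern `123` (as a permutation of `Fin 3`, 0-indexed). -/
def p123 : Equiv.Perm (Fin 3) := ⟨![0,1,2], ![0,1,2], by decide, by decide⟩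
/-- The pattern `132`. -/
def p132 : Equiv.Perm (Fin 3) := ⟨![0,2,1], ![0,2,1], by decide, by decide⟩
/-- The pattern `213`. -/
def p213 : Equiv.Perm (Fin 3) := ⟨![1,0,2], ![1,0,2], by decide, by decide⟩
/-- The pattern `231`. -/
def p231 : Equiv.Perm (Fin 3) := ⟨![1,2,0], ![2,0,1], by decide, by decide⟩
/-- The pattern `312`. -/
def p312 : Equiv.Perm (Fin 3) := ⟨![2,0,1], ![1,2,0], by decide, by decide⟩
/-- The pattern `321`. -/
def p321 : Equiv.Perm (Fin 3) := ⟨![2,1,0], ![2,1,0], by decide, by decide⟩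

/-- `s_n(α;β)`: the number of permutations of `{1,…,n}` that avoid `α` and contain `β`
exactly once. -/
noncomputable def sAvoidContain (α β : Equiv.Perm (Fin 3)) (n : ℕ) : ℕ :=
  Nat.card {π : Equiv.Perm (Fin n) // avoids α π ∧ containsOnce β π}

/-- `s_n(∅;{α,β})`: the number of permutations of `{1,…,n}` that contain each of `α` and `β`
exactly once. -/
noncomputable def sContainBoth (α β : Equiv.Perm (Fin 3)) (n : ℕ) : ℕ :=
  Nat.card {π : Equiv.Perm (Fin n) // containsOnce α π ∧ containsOnce β π}

namespace ClassB

/-- `x < y` or `y < x`, according to the Boolean. -/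
def ltb {n : ℕ} (b : Bool) (x y : Fin n) : Prop := if b = true then x < y else y < x

instance {n : ℕ} (b : Bool) (x y : Fin n) : Decidable (ltb b x y) := by
  unfold ltb; infer_instance

/-- number of 123 (resp. 132) occurrences -/
def N {n : ℕ} (b : Bool) (σ : Equiv.Perm (Fin n)) : ℕ :=
  ∑ i, ∑ j, ∑ l, if i < j ∧ j < l ∧ σ i < σ j ∧ σ i < σ l ∧ ltb b (σ j) (σ l) then 1 else 0

/-- number of ascents-pairs (resp. descents-pairs) with values at least `k` -/
def A {n : ℕ} (b : Bool) (k : ℕ) (σ : Equiv.Perm (Fin n)) : ℕ :=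
  ∑ j, ∑ l, if j < l ∧ k ≤ (σ j : ℕ) ∧ k ≤ (σ l : ℕ) ∧ ltb b (σ j) (σ l) then 1 else 0

/-- prepend the value `k` -/
def cons {n : ℕ} (k : Fin (n + 1)) (σ : Equiv.Perm (Fin n)) : Equiv.Perm (Fin (n + 1)) :=
  (finSuccEquiv n).trans ((Equiv.optionCongr σ).trans (finSuccEquiv' k).symm)

@[simp] lemma cons_zero {n : ℕ} (k : Fin (n + 1)) (σ : Equiv.Perm (Fin n)) : cons k σ 0 = k := by
  simp [cons]

@[simp] lemma cons_succ {n : ℕ} (k : Fin (n + 1)) (σ : Equiv.Perm (Fin n)) (i : Fin n) :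
    cons k σ i.succ = k.succAbove (σ i) := by
  simp [cons]

lemma cons_bij (n : ℕ) : Function.Bijective
    (fun p : Fin (n + 1) × Equiv.Perm (Fin n) => cons p.1 p.2) := by
  rw [Fintype.bijective_iff_injective_and_card]
  constructor
  · rintro ⟨k, σ⟩ ⟨k', σ'⟩ h
    have h0 : k = k' := by simpa using congrArg (fun e : Equiv.Perm (Fin (n+1)) => e 0) h
    subst h0
    congr 1
    ext i
    have := congrArg (fun e : Equiv.Perm (Fin (n+1)) => e i.succ) h
    simp only [cons_succ] at this
    rw [Fin.succAbove_right_injective this]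
  · simp [Fintype.card_perm, Nat.factorial_succ]

lemma sum_cons {n : ℕ} (f : Equiv.Perm (Fin (n + 1)) → ℕ) :
    ∑ σ, f σ = ∑ k, ∑ τ, f (cons k τ) := by
  rw [← Fintype.sum_prod_type' (f := fun k τ => f (cons k τ))]
  exact ((cons_bij n).sum_comp f).symm

lemma ltb_succAbove {n : ℕ} (b : Bool) (k : Fin (n + 1)) (x y : Fin n) :
    ltb b (k.succAbove x) (k.succAbove y) ↔ ltb b x y := by
  unfold ltb; split <;> simp

lemma N_cons {n : ℕ} (b : Bool) (k : Fin (n + 1)) (σ : Equiv.Perm (Fin n)) :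
    N b (cons k σ) = N b σ + A b k σ := by
  rw [add_comm (N b σ)]
  unfold N A
  simp only [Fin.sum_univ_succ, cons_zero, cons_succ, ltb_succAbove, Fin.succ_lt_succ_iff,
    Fin.succAbove_lt_succAbove_iff, Fin.lt_succAbove_iff_le_castSucc, Fin.le_def,
    Fin.val_castSucc]
  simp

lemma A_add {n : ℕ} (k : ℕ) (σ : Equiv.Perm (Fin n)) :
    2 * (A true k σ + A false k σ) = (n - k) * (n - k - 1) := by
  have h1 : A true k σ + A false k σ =
      ∑ j, ∑ l, if j < l ∧ k ≤ (σ j : ℕ) ∧ k ≤ (σ l : ℕ) then 1 else 0 := by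
    unfold A
    simp only [← Finset.sum_add_distrib]
    refine Finset.sum_congr rfl fun j _ => Finset.sum_congr rfl fun l _ => ?_
    by_cases hjl : j < l
    · have : σ j ≠ σ l := fun h => hjl.ne (σ.injective h)
      rcases lt_or_gt_of_ne this with h | h
      · simp [ltb, hjl, h, h.le, h.not_gt]
      · simp [ltb, hjl, h, h.le, h.not_gt]
    · simp [hjl]
  have h2 : 2 * (A true k σ + A false k σ) =
      ∑ j, ∑ l, if σ j ≠ σ l ∧ k ≤ (σ j : ℕ) ∧ k ≤ (σ l : ℕ) then 1 else 0 := by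
    have h1' := h1.trans Finset.sum_comm
    rw [two_mul]
    refine (congrArg₂ (· + ·) h1 h1').trans ?_
    simp only [← Finset.sum_add_distrib]
    refine Finset.sum_congr rfl fun j _ => Finset.sum_congr rfl fun l _ => ?_
    rcases lt_trichotomy j l with h | h | h
    · simp [h, h.ne, h.not_gt]
    · simp [h]
    · simp [h, h.ne', h.not_gt, and_comm]
  have h3 : (∑ j, ∑ l, if σ j ≠ σ l ∧ k ≤ (σ j : ℕ) ∧ k ≤ (σ l : ℕ) then 1 else 0)
      = ∑ j : Fin n, ∑ l : Fin n, if j ≠ l ∧ k ≤ (j : ℕ) ∧ k ≤ (l : ℕ) then 1 else 0 := by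
    rw [← Equiv.sum_comp σ (fun j => ∑ l : Fin n, if j ≠ l ∧ k ≤ (j : ℕ) ∧ k ≤ (l : ℕ) then 1 else 0)]
    refine Finset.sum_congr rfl fun j _ => ?_
    rw [← Equiv.sum_comp σ (fun l => if σ j ≠ l ∧ k ≤ (σ j : ℕ) ∧ k ≤ (l : ℕ) then 1 else 0)]
  rw [h2, h3, ← Fintype.sum_prod_type'
    (f := fun j l : Fin n => if j ≠ l ∧ k ≤ (j : ℕ) ∧ k ≤ (l : ℕ) then 1 else 0),
    ← Finset.card_filter]
  have hc : (Finset.univ.filter (fun u : Fin n => k ≤ (u : ℕ))).card = n - k := by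
    have h4 := Finset.card_filter_add_card_filter_not (s := (Finset.univ : Finset (Fin n)))
      (fun u : Fin n => (u : ℕ) < k)
    simp only [not_lt, Fin.card_filter_val_lt, Finset.card_univ, Fintype.card_fin] at h4
    omega
  have : (Finset.univ.filter (fun x : Fin n × Fin n => x.1 ≠ x.2 ∧ k ≤ (x.1 : ℕ) ∧ k ≤ (x.2 : ℕ)))
      = (Finset.univ.filter (fun u : Fin n => k ≤ (u : ℕ))).offDiag := by
    ext ⟨u, v⟩; simp; tauto
  rw [this, Finset.offDiag_card, hc, Nat.mul_sub _ (n - k) 1, mul_one]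

lemma A_add' {n : ℕ} (b : Bool) (k : ℕ) (σ : Equiv.Perm (Fin n)) :
    2 * (A b k σ + A (!b) k σ) = (n - k) * (n - k - 1) := by
  rw [← A_add k σ]; cases b <;> simp [add_comm]

lemma A_zero {n : ℕ} (b : Bool) (k : ℕ) (hk : n ≤ k + 1) (σ : Equiv.Perm (Fin n)) :
    A b k σ = 0 := by
  have h := A_add' b k σ
  have : (n - k) * (n - k - 1) = 0 := by
    rw [mul_eq_zero]; omega
  omega

lemma A_one (b : Bool) {m : ℕ} (σ : Equiv.Perm (Fin (m + 2))) :
    A b m σ + A (!b) m σ = 1 := by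
  have h := A_add' b m σ
  simp at h
  omega

lemma A_big (b : Bool) {n : ℕ} (k : ℕ) (hk : k + 3 ≤ n) (σ : Equiv.Perm (Fin n)) :
    3 ≤ A b k σ + A (!b) k σ := by
  have h := A_add' b k σ
  have : 3 * 2 ≤ (n - k) * (n - k - 1) := Nat.mul_le_mul (by omega) (by omega)
  omega

/-- number of permutations avoiding both -/
def F (b : Bool) (n : ℕ) : ℕ :=
  ∑ σ : Equiv.Perm (Fin n), if N (!b) σ = 0 ∧ N b σ = 0 then 1 else 0

/-- number of permutations containing exactly one -/
def G (b : Bool) (n : ℕ) : ℕ :=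
  ∑ σ : Equiv.Perm (Fin n), if N (!b) σ = 0 ∧ N b σ = 1 then 1 else 0

/-- number of permutations avoiding both, top two elements in prescribed order -/
def H (b : Bool) (m : ℕ) : ℕ :=
  ∑ σ : Equiv.Perm (Fin (m + 2)),
    if N (!b) σ = 0 ∧ N b σ = 0 ∧ A b m σ = 1 ∧ A (!b) m σ = 0 then 1 else 0

lemma F_succ (b : Bool) (m : ℕ) : F b (m + 2) = 2 * F b (m + 1) := by
  unfold F
  rw [sum_cons, Fin.sum_univ_castSucc, Fin.sum_univ_castSucc]
  have hz : ∑ i : Fin m, ∑ τ : Equiv.Perm (Fin (m + 1)),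
      (if N (!b) (cons i.castSucc.castSucc τ) = 0 ∧ N b (cons i.castSucc.castSucc τ) = 0
        then 1 else 0) = 0 := by
    refine Finset.sum_eq_zero fun i _ => Finset.sum_eq_zero fun τ _ => ?_
    rw [if_neg]
    simp only [N_cons, Fin.val_castSucc]
    intro h
    have h1 := A_add' b i τ
    have : 2 * 1 ≤ (m + 1 - i) * (m + 1 - i - 1) := Nat.mul_le_mul (by omega) (by omega)
    omega
  rw [hz]
  simp only [N_cons, Fin.val_castSucc, Fin.val_last]
  simp only [A_zero _ (m + 1) (show m + 1 ≤ m + 1 + 1 by omega),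
    A_zero _ m (show m + 1 ≤ m + 1 by omega)]
  simp [two_mul]

lemma N_small (b : Bool) {n : ℕ} (hn : n ≤ 2) (σ : Equiv.Perm (Fin n)) : N b σ = 0 := by
  unfold N
  refine Finset.sum_eq_zero fun i _ => Finset.sum_eq_zero fun j _ =>
    Finset.sum_eq_zero fun l _ => ?_
  rw [if_neg]
  rintro ⟨h1, h2, -⟩
  have := l.2
  simp only [Fin.lt_def] at h1 h2
  omega

lemma F_eq (b : Bool) (m : ℕ) : F b (m + 1) = 2 ^ m := by
  induction m with
  | zero => simp [F, N_small]
  | succ m ih => rw [F_succ, ih, pow_succ]; ring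

lemma A_last {m : ℕ} (σ : Equiv.Perm (Fin (m + 2))) (h : (σ 0 : ℕ) = m + 1) :
    A true m σ = 0 := by
  unfold A
  refine Finset.sum_eq_zero fun j _ => Finset.sum_eq_zero fun l _ => ?_
  rw [if_neg]
  rintro ⟨h1, h2, h3, h4⟩
  simp only [ltb, if_true, Fin.lt_def] at h4
  have : l = 0 := σ.injective (Fin.ext (by omega))
  subst this
  simp at h1

lemma A_prelast {m : ℕ} (σ : Equiv.Perm (Fin (m + 2))) (h : (σ 0 : ℕ) = m) :
    A false m σ = 0 := by
  unfold A
  refine Finset.sum_eq_zero fun j _ => Finset.sum_eq_zero fun l _ => ?_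
  rw [if_neg]
  rintro ⟨h1, h2, h3, h4⟩
  simp only [ltb, Fin.lt_def] at h4
  have : l = 0 := σ.injective (Fin.ext (by simp at h4; omega))
  subst this
  simp at h1

lemma H_eq (b : Bool) (m : ℕ) : H b m = F b (m + 1) := by
  unfold H F
  rw [sum_cons, Fin.sum_univ_castSucc, Fin.sum_univ_castSucc]
  have hz : ∑ i : Fin m, ∑ τ : Equiv.Perm (Fin (m + 1)),
      (if N (!b) (cons i.castSucc.castSucc τ) = 0 ∧ N b (cons i.castSucc.castSucc τ) = 0
        ∧ A b m (cons i.castSucc.castSucc τ) = 1 ∧ A (!b) m (cons i.castSucc.castSucc τ) = 0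
        then 1 else 0) = 0 := by
    refine Finset.sum_eq_zero fun i _ => Finset.sum_eq_zero fun τ _ => ?_
    rw [if_neg]
    simp only [N_cons, Fin.val_castSucc]
    intro h
    have h1 := A_add' b i τ
    have : 2 * 1 ≤ (m + 1 - i) * (m + 1 - i - 1) := Nat.mul_le_mul (by omega) (by omega)
    omega
  rw [hz]
  have hl (τ : Equiv.Perm (Fin (m + 1))) : A true m (cons (Fin.last (m + 1)) τ) = 0 :=
    A_last _ (by simp)
  have hp (τ : Equiv.Perm (Fin (m + 1))) : A false m (cons (Fin.last m).castSucc τ) = 0 :=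
    A_prelast _ (by simp)
  have hl' (τ : Equiv.Perm (Fin (m + 1))) : A false m (cons (Fin.last (m + 1)) τ) = 1 := by
    have := A_one true (cons (Fin.last (m + 1)) τ)
    have := hl τ
    simp_all
  have hp' (τ : Equiv.Perm (Fin (m + 1))) : A true m (cons (Fin.last m).castSucc τ) = 1 := by
    have := A_one true (cons (Fin.last m).castSucc τ)
    have := hp τ
    simp_all
  simp only [N_cons, Fin.val_castSucc, Fin.val_last]
  simp only [A_zero _ (m + 1) (show m + 1 ≤ m + 1 + 1 by omega),
    A_zero _ m (show m + 1 ≤ m + 1 by omega)]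
  cases b <;> simp [hl, hp, hl', hp']

lemma G_succ (b : Bool) (m : ℕ) : G b (m + 3) = 2 * G b (m + 2) + H b m := by
  unfold G H
  rw [sum_cons, Fin.sum_univ_castSucc, Fin.sum_univ_castSucc, Fin.sum_univ_castSucc]
  have hz : ∑ i : Fin m, ∑ τ : Equiv.Perm (Fin (m + 2)),
      (if N (!b) (cons i.castSucc.castSucc.castSucc τ) = 0
        ∧ N b (cons i.castSucc.castSucc.castSucc τ) = 1
        then 1 else 0) = 0 := by
    refine Finset.sum_eq_zero fun i _ => Finset.sum_eq_zero fun τ _ => ?_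
    rw [if_neg]
    simp only [N_cons, Fin.val_castSucc]
    intro h
    have h1 := A_big b i (by omega) τ
    omega
  rw [hz]
  simp only [N_cons, Fin.val_castSucc, Fin.val_last]
  simp only [A_zero _ (m + 1 + 1) (show m + 2 ≤ m + 1 + 1 + 1 by omega),
    A_zero _ (m + 1) (show m + 2 ≤ m + 1 + 1 by omega)]
  have hh : ∀ τ : Equiv.Perm (Fin (m + 2)),
      (N (!b) τ + A (!b) m τ = 0 ∧ N b τ + A b m τ = 1) ↔
      (N (!b) τ = 0 ∧ N b τ = 0 ∧ A b m τ = 1 ∧ A (!b) m τ = 0) := by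
    intro τ
    have := A_one b τ
    omega
  simp only [hh]
  simp [two_mul]
  ring

lemma G_eq (b : Bool) (m : ℕ) : G b (m + 3) = (m + 1) * 2 ^ m := by
  induction m with
  | zero =>
    rw [G_succ, H_eq, F_eq]
    simp [G, N_small]
  | succ m ih =>
    rw [G_succ, H_eq, F_eq, ih, pow_succ]; ring

/-- the pattern attached to the Boolean -/
def pat (b : Bool) : Equiv.Perm (Fin 3) := if b = true then p123 else p132

lemma pat_iff (b : Bool) {n : ℕ} (x y z : Fin n) :
    (∀ a c : Fin 3, pat b a < pat b c ↔ (![x, y, z] a) < (![x, y, z] c)) ↔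
      (x < y ∧ x < z ∧ ltb b y z) := by
  cases b
  · simp only [pat, p132, ltb, Fin.forall_fin_succ]
    simp
    grind
  · simp only [pat, p123, ltb, Fin.forall_fin_succ]
    simp
    grind

lemma occ_eq (b : Bool) {n : ℕ} (π : Equiv.Perm (Fin n)) : occCount (pat b) π = N b π := by
  have hN : N b π = Nat.card {t : Fin n × Fin n × Fin n // t.1 < t.2.1 ∧ t.2.1 < t.2.2 ∧
      π t.1 < π t.2.1 ∧ π t.1 < π t.2.2 ∧ ltb b (π t.2.1) (π t.2.2)} := by
    rw [Nat.card_eq_fintype_card, Fintype.card_subtype, Finset.card_filter,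
      Fintype.sum_prod_type]
    simp only [Fintype.sum_prod_type]
    rfl
  rw [hN, occCount]
  have key (f : Fin 3 → Fin n) : (StrictMono f ∧ ∀ a c : Fin 3, pat b a < pat b c ↔
      π (f a) < π (f c)) ↔ (f 0 < f 1 ∧ f 1 < f 2 ∧ π (f 0) < π (f 1) ∧ π (f 0) < π (f 2) ∧
        ltb b (π (f 1)) (π (f 2))) := by
    have h := pat_iff b (π (f 0)) (π (f 1)) (π (f 2))
    have e : ∀ a, ![π (f 0), π (f 1), π (f 2)] a = π (f a) := by
      intro a; fin_cases a <;> rfl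
    simp only [e] at h
    rw [h, Fin.strictMono_iff_lt_succ, Fin.forall_fin_two]
    simp [and_assoc]
  refine Nat.card_congr ⟨fun f => ⟨(f.1 0, f.1 1, f.1 2), (key f.1).1 f.2⟩,
    fun t => ⟨![t.1.1, t.1.2.1, t.1.2.2], (key _).2 (by simpa using t.2)⟩, ?_, ?_⟩
  · rintro ⟨f, hf⟩
    apply Subtype.ext
    funext a
    fin_cases a <;> rfl
  · rintro ⟨⟨x, y, z⟩, ht⟩
    rfl

lemma base (b : Bool) (m : ℕ) :
    sAvoidContain (pat (!b)) (pat b) (m + 3) = (m + 1) * 2 ^ m := by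
  classical
  rw [← G_eq b, sAvoidContain, Nat.card_eq_fintype_card, Fintype.card_subtype, Finset.card_filter,
    G]
  simp only [avoids, containsOnce, occ_eq]

lemma occ_rev {k n : ℕ} (α : Equiv.Perm (Fin k)) (π : Equiv.Perm (Fin n)) :
    occCount (Fin.revPerm.trans α) (Fin.revPerm.trans π) = occCount α π := by
  unfold occCount
  have key (f : Fin k → Fin n) :
      (StrictMono f ∧ ∀ a b : Fin k, (Fin.revPerm.trans α) a < (Fin.revPerm.trans α) b ↔
        (Fin.revPerm.trans π) (f a) < (Fin.revPerm.trans π) (f b)) ↔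
      (StrictMono (fun a : Fin k => (f a.rev).rev) ∧ ∀ a b : Fin k, α a < α b ↔
        π (f a.rev).rev < π (f b.rev).rev) := by
    apply and_congr
    · constructor
      · intro h a b hab
        simpa using h (Fin.rev_lt_rev.2 hab)
      · intro h a b hab
        simpa using h (Fin.rev_lt_rev.2 hab)
    · constructor
      · intro h a b
        simpa using h a.rev b.rev
      · intro h a b
        simpa using h a.rev b.rev
  let e : (Fin k → Fin n) ≃ (Fin k → Fin n) :=
    ⟨fun f a => (f a.rev).rev, fun f a => (f a.rev).rev, fun f => by simp, fun f => by simp⟩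
  exact Nat.card_congr (e.subtypeEquiv key)

lemma occ_compl {k n : ℕ} (α : Equiv.Perm (Fin k)) (π : Equiv.Perm (Fin n)) :
    occCount (α.trans Fin.revPerm) (π.trans Fin.revPerm) = occCount α π := by
  unfold occCount
  refine Nat.card_congr (Equiv.subtypeEquivRight fun f => ?_)
  apply and_congr_right
  intro _
  constructor
  · intro h a b
    simpa using h b a
  · intro h a b
    simpa using h b a

lemma s_rev (α β : Equiv.Perm (Fin 3)) (n : ℕ) :
    sAvoidContain (Fin.revPerm.trans α) (Fin.revPerm.trans β) n = sAvoidContain α β n := by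
  unfold sAvoidContain
  symm
  refine Nat.card_congr (Equiv.subtypeEquiv (Equiv.mulRight (Fin.revPerm : Equiv.Perm (Fin n)))
    fun π => ?_)
  have : (Equiv.mulRight (Fin.revPerm : Equiv.Perm (Fin n))) π = Fin.revPerm.trans π := rfl
  simp only [this, avoids, containsOnce, occ_rev]

lemma s_compl (α β : Equiv.Perm (Fin 3)) (n : ℕ) :
    sAvoidContain (α.trans Fin.revPerm) (β.trans Fin.revPerm) n = sAvoidContain α β n := by
  unfold sAvoidContain
  symm
  refine Nat.card_congr (Equiv.subtypeEquiv (Equiv.mulLeft (Fin.revPerm : Equiv.Perm (Fin n)))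
    fun π => ?_)
  have : (Equiv.mulLeft (Fin.revPerm : Equiv.Perm (Fin n))) π = π.trans Fin.revPerm := rfl
  simp only [this, avoids, containsOnce, occ_compl]

lemma r123 : Fin.revPerm.trans p123 = p321 := by decide
lemma r132 : Fin.revPerm.trans p132 = p231 := by decide
lemma c123 : p123.trans Fin.revPerm = p321 := by decide
lemma c132 : p132.trans Fin.revPerm = p312 := by decide
lemma c321 : p321.trans Fin.revPerm = p123 := by decide
lemma c231 : p231.trans Fin.revPerm = p213 := by decide

end ClassB

/-- Theorem 4.1: for each listed pair `(α,β)`, `s_n(α;β) = (n−2)·2^{n−3}` for `n ≥ 3`. -/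
theorem sAvoidContain_eq_of_mem_classB :
    ∀ p ∈ [(p123, p132), (p123, p213), (p132, p123), (p213, p123),
           (p231, p321), (p312, p321), (p321, p231), (p321, p312)],
      ∀ n : ℕ, 3 ≤ n → sAvoidContain p.1 p.2 n = (n - 2) * 2 ^ (n - 3) := by
  intro p hp n hn
  obtain ⟨m, rfl⟩ := Nat.exists_eq_add_of_le' hn
  have e1 : m + 3 - 2 = m + 1 := by omega
  have e2 : m + 3 - 3 = m := by omega
  rw [e1, e2]
  have h1 : sAvoidContain p123 p132 (m + 3) = (m + 1) * 2 ^ m := ClassB.base false m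
  have h2 : sAvoidContain p132 p123 (m + 3) = (m + 1) * 2 ^ m := ClassB.base true m
  have h3 := ClassB.s_rev p123 p132 (m + 3)
  have h4 := ClassB.s_rev p132 p123 (m + 3)
  have h5 := ClassB.s_compl p123 p132 (m + 3)
  have h6 := ClassB.s_compl p132 p123 (m + 3)
  have h7 := ClassB.s_compl p321 p231 (m + 3)
  have h8 := ClassB.s_compl p231 p321 (m + 3)
  rw [ClassB.r123, ClassB.r132] at h3
  rw [ClassB.r123, ClassB.r132] at h4
  rw [ClassB.c123, ClassB.c132] at h5
  rw [ClassB.c123, ClassB.c132] at h6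
  rw [ClassB.c321, ClassB.c231] at h7
  rw [ClassB.c321, ClassB.c231] at h8
  simp only [List.mem_cons, List.not_mem_nil, or_false] at hp
  rcases hp with rfl | rfl | rfl | rfl | rfl | rfl | rfl | rfl <;> simp only <;> omega
end

section
/- For each ordered pair (α,β) in {(123,231), (123,312), (321,132), (321,213)} of patterns of length three, and for every n ≥ 3, the number of permutations of {1,…,n} that avoid α and contain β exactly once is s_n(α;β) = 2n−5. -/
/-- An occurrence of `213` at positions `i < j < k`. -/
def Occ213 {n : ℕ} (π : Equiv.Perm (Fin n)) (i j k : Fin n) : Prop :=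
  i < j ∧ j < k ∧ π j < π i ∧ π i < π k

/-- An occurrence of `321` at positions `i < j < k`. -/
def Occ321 {n : ℕ} (π : Equiv.Perm (Fin n)) (i j k : Fin n) : Prop :=
  i < j ∧ j < k ∧ π j < π i ∧ π k < π j

lemma cond213 {n : ℕ} (π : Equiv.Perm (Fin n)) (f : Fin 3 → Fin n) :
    (StrictMono f ∧ ∀ a b : Fin 3, p213 a < p213 b ↔ π (f a) < π (f b)) ↔
      Occ213 π (f 0) (f 1) (f 2) := by
  unfold Occ213
  constructor
  · rintro ⟨hf, h⟩
    exact ⟨hf (by decide), hf (by decide), (h 1 0).1 (by decide), (h 0 2).1 (by decide)⟩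
  · rintro ⟨h1, h2, h3, h4⟩
    refine ⟨?_, ?_⟩
    · rw [Fin.strictMono_iff_lt_succ]
      intro i; fin_cases i
      · exact h1
      · exact h2
    · intro a b
      fin_cases a <;> fin_cases b <;> simp [p213] <;> omega

lemma cond321 {n : ℕ} (π : Equiv.Perm (Fin n)) (f : Fin 3 → Fin n) :
    (StrictMono f ∧ ∀ a b : Fin 3, p321 a < p321 b ↔ π (f a) < π (f b)) ↔
      Occ321 π (f 0) (f 1) (f 2) := by
  unfold Occ321
  constructor
  · rintro ⟨hf, h⟩
    exact ⟨hf (by decide), hf (by decide), (h 1 0).1 (by decide), (h 2 1).1 (by decide)⟩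
  · rintro ⟨h1, h2, h3, h4⟩
    refine ⟨?_, ?_⟩
    · rw [Fin.strictMono_iff_lt_succ]
      intro i; fin_cases i
      · exact h1
      · exact h2
    · intro a b
      fin_cases a <;> fin_cases b <;> simp [p321] <;> omega

lemma avoids321_iff {n : ℕ} (π : Equiv.Perm (Fin n)) :
    avoids p321 π ↔ ∀ i j k, ¬ Occ321 π i j k := by
  unfold avoids occCount
  rw [Finite.card_eq_zero_iff]
  constructor
  · intro h i j k ho
    exact h.false ⟨![i, j, k], (cond321 π _).2 ho⟩
  · intro h
    exact ⟨fun f => h _ _ _ ((cond321 π _).1 f.2)⟩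

lemma once213_iff {n : ℕ} (π : Equiv.Perm (Fin n)) :
    containsOnce p213 π ↔ ∃ i j k, Occ213 π i j k ∧
      ∀ i' j' k', Occ213 π i' j' k' → i' = i ∧ j' = j ∧ k' = k := by
  unfold containsOnce occCount
  rw [Nat.card_eq_one_iff_exists]
  constructor
  · rintro ⟨f, hf⟩
    refine ⟨_, _, _, (cond213 π _).1 f.2, ?_⟩
    intro i j k ho
    have := congrArg Subtype.val (hf ⟨![i, j, k], (cond213 π _).2 ho⟩)
    simp only at this
    rw [← this]
    exact ⟨rfl, rfl, rfl⟩
  · rintro ⟨i, j, k, ho, hu⟩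
    refine ⟨⟨![i, j, k], (cond213 π _).2 ho⟩, ?_⟩
    rintro ⟨f, hf⟩
    obtain ⟨h0, h1, h2⟩ := hu _ _ _ ((cond213 π _).1 hf)
    apply Subtype.ext
    funext x
    fin_cases x
    · exact h0
    · exact h1
    · exact h2

/-- The predicate counted, for the pair (321, 213). -/
def Good {n : ℕ} (π : Equiv.Perm (Fin n)) : Prop :=
  (∀ i j k, ¬ Occ321 π i j k) ∧ ∃ i j k, Occ213 π i j k ∧
      ∀ i' j' k', Occ213 π i' j' k' → i' = i ∧ j' = j ∧ k' = k

lemma perm_eq_of_order {n : ℕ} (π σ : Equiv.Perm (Fin n))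
    (h : ∀ i j, i < j → (π i < π j ↔ σ i < σ j)) : π = σ := by
  have hm : StrictMono (fun x => π (σ.symm x)) := by
    intro x y hxy
    rcases lt_trichotomy (σ.symm x) (σ.symm y) with h1 | h1 | h1
    · exact (h _ _ h1).2 (by simpa using hxy)
    · have := σ.symm.injective h1
      omega
    · have h2 := h _ _ h1
      simp only [Equiv.apply_symm_apply] at h2
      have h3 : π (σ.symm x) ≠ π (σ.symm y) := by
        intro h4
        have := π.injective h4
        omega
      show π (σ.symm x) < π (σ.symm y)
      omega
  have hid : (fun x => π (σ.symm x)) = id := by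
    exact le_antisymm hm.le_id hm.id_le
  ext x
  have := congrFun hid (σ x)
  simp at this
  rw [this]

/-- The permutation `2 4 5 … n 1 3`; its inverse is `(n-1) 1 n 2 3 … (n-2)`. -/
def permA (n : ℕ) (hn : 2 ≤ n) : Equiv.Perm (Fin (n + 1)) where
  toFun i := ⟨if i.1 = 0 then 1 else if i.1 = n then 2 else if i.1 = n - 1 then 0 else i.1 + 2,
    by have := i.2; split_ifs <;> omega⟩
  invFun i := ⟨if i.1 = 0 then n - 1 else if i.1 = 1 then 0 else if i.1 = 2 then n else i.1 - 2,
    by have := i.2; split_ifs <;> omega⟩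
  left_inv i := by
    ext; have := i.2; grind
  right_inv i := by
    ext; have := i.2; grind

lemma permA_lt (n : ℕ) (hn : 2 ≤ n) (i j : Fin (n + 1)) (h : i < j) :
    permA n hn i < permA n hn j ↔ ¬ (j.1 = n - 1 ∨ (j.1 = n ∧ 1 ≤ i.1 ∧ i.1 ≤ n - 2)) := by
  have := i.2; have := j.2
  rw [Fin.lt_def] at h ⊢
  simp only [permA, Equiv.coe_fn_mk]
  split_ifs <;> omega

lemma permB_lt (n : ℕ) (hn : 2 ≤ n) (i j : Fin (n + 1)) (h : i < j) :
    (permA n hn).symm i < (permA n hn).symm j ↔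
      ¬ ((i.1 = 0 ∧ j.1 ≠ 2) ∨ i.1 = 2) := by
  have := i.2; have := j.2
  rw [Fin.lt_def] at h ⊢
  simp only [permA, Equiv.coe_fn_symm_mk]
  split_ifs <;> omega

lemma perm_lt_not {n : ℕ} (π : Equiv.Perm (Fin n)) {i j : Fin n} (h : i < j) :
    π j < π i ↔ ¬ π i < π j := by
  have : π i ≠ π j := fun h' => by have := π.injective h'; omega
  omega

lemma good_permA (n : ℕ) (hn : 2 ≤ n) : Good (permA n hn) := by
  refine ⟨?_, ⟨0, by omega⟩, ⟨n - 1, by omega⟩, ⟨n, by omega⟩, ⟨?_, ?_, ?_, ?_⟩, ?_⟩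
  · rintro i j k ⟨h1, h2, h3, h4⟩
    rw [perm_lt_not _ h1, permA_lt _ _ _ _ h1] at h3
    rw [perm_lt_not _ h2, permA_lt _ _ _ _ h2] at h4
    omega
  · rw [Fin.lt_def]; simp only []; omega
  · rw [Fin.lt_def]; simp only []; omega
  · rw [Fin.lt_def]; simp only [permA, Equiv.coe_fn_mk]; split_ifs <;> omega
  · rw [Fin.lt_def]; simp only [permA, Equiv.coe_fn_mk]; split_ifs <;> omega
  · rintro i j k ⟨h1, h2, h3, h4⟩
    rw [perm_lt_not _ h1, permA_lt _ _ _ _ h1] at h3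
    rw [permA_lt _ _ _ _ (h1.trans h2)] at h4
    simp only [Fin.ext_iff]
    omega

lemma good_permB (n : ℕ) (hn : 2 ≤ n) : Good (permA n hn).symm := by
  refine ⟨?_, ⟨0, by omega⟩, ⟨1, by omega⟩, ⟨2, by omega⟩, ⟨?_, ?_, ?_, ?_⟩, ?_⟩
  · rintro i j k ⟨h1, h2, h3, h4⟩
    rw [perm_lt_not _ h1, permB_lt _ _ _ _ h1] at h3
    rw [perm_lt_not _ h2, permB_lt _ _ _ _ h2] at h4
    omega
  · rw [Fin.lt_def]; simp only []; omega
  · rw [Fin.lt_def]; simp only []; omega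
  · rw [Fin.lt_def]; simp only [permA, Equiv.coe_fn_symm_mk]; grind
  · rw [Fin.lt_def]; simp only [permA, Equiv.coe_fn_symm_mk]; grind
  · rintro i j k ⟨h1, h2, h3, h4⟩
    rw [perm_lt_not _ h1, permB_lt _ _ _ _ h1] at h3
    rw [permB_lt _ _ _ _ (h1.trans h2)] at h4
    simp only [Fin.ext_iff]
    omega

lemma good_classify (n : ℕ) (hn : 2 ≤ n) (π : Equiv.Perm (Fin (n + 1))) (h0 : π 0 ≠ 0)
    (hg : Good π) : π = permA n hn ∨ π = (permA n hn).symm := by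
  obtain ⟨hav, i0, j0, k0, ho, hu⟩ := hg
  obtain ⟨p, hp⟩ := π.surjective 0
  have hne : ∀ i j, i < j → π i ≠ π j := fun i j hij h' => by have := π.injective h'; omega
  have hp0 : 0 < p := by
    rcases (Fin.zero_le p).eq_or_lt' with h | h
    · subst h; exact absurd hp h0
    · exact h
  have hpmin : ∀ i, i ≠ p → π p < π i := by
    intro i hi
    rw [hp]
    apply Fin.pos_of_ne_zero
    rw [← hp]
    exact fun h => hi (π.injective h)
  have hbef : ∀ i j, i < j → j < p → π i < π j := by
    intro i j hij hjp
    by_contra hlt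
    have := hne i j hij
    exact hav i j p ⟨hij, hjp, by omega, hpmin j (by omega)⟩
  have h0le : ∀ i, i < p → π 0 ≤ π i := by
    intro i hi
    rcases (Fin.zero_le i).eq_or_lt' with h | h
    · subst h; exact le_rfl
    · exact (hbef 0 i h hi).le
  have hk : ∃ k, p < k ∧ π 0 < π k := by
    by_contra hcon
    push Not at hcon
    obtain ⟨a1, a2, a3, a4⟩ := ho
    have hj : p ≤ j0 := by
      by_contra h
      have := hbef i0 j0 a1 (by omega)
      omega
    have hk0 := hcon k0 (by omega)
    rcases lt_trichotomy i0 p with hi | hi | hi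
    · have := h0le i0 hi
      omega
    · have := hpmin j0 (by omega)
      rw [hi] at a3
      omega
    · exact hav 0 i0 j0 ⟨by omega, a1, by omega, a3⟩
  obtain ⟨k, hpk, hk⟩ := hk
  have hO : ∀ i' j' k', Occ213 π i' j' k' → i' = 0 ∧ j' = p ∧ k' = k := by
    obtain ⟨e1, e2, e3⟩ := hu 0 p k ⟨hp0, hpk, hpmin 0 (by omega), hk⟩
    subst e1 e2 e3
    exact hu
  have hmid : ∀ i, 0 < i → i < p → π k < π i := by
    intro i hi hip
    by_contra hlt
    have h1 := hne i k (by omega)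
    have := hO i p k ⟨hip, hpk, hpmin i (by omega), by omega⟩
    omega
  have haft : ∀ i, p < i → i ≠ k → π i < π 0 := by
    intro i hi hik
    by_contra hlt
    have h1 := hne 0 i (by omega)
    have := hO 0 p i ⟨hp0, hi, hpmin 0 (by omega), by omega⟩
    omega
  have hkmin : ∀ i, p < i → k ≤ i := by
    intro i hi
    by_contra hlt
    have := hO 0 i k ⟨by omega, by omega, haft i hi (by omega), hk⟩
    omega
  have hkp : k.1 = p.1 + 1 := by
    have := hkmin ⟨p.1 + 1, by omega⟩ (by rw [Fin.lt_def]; simp)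
    rw [Fin.le_def] at this
    simp only [] at this
    omega
  have hor : k.1 = n ∨ p.1 = 1 := by
    by_contra hcon
    have hl : k < Fin.last n := by rw [Fin.lt_def, Fin.val_last]; omega
    have h1p : (⟨1, by omega⟩ : Fin (n + 1)) < p := by
      rw [Fin.lt_def] at hp0 ⊢
      simp at hp0 ⊢
      omega
    have h1 := hmid ⟨1, by omega⟩ (by rw [Fin.lt_def]; simp) h1p
    have h2 := haft (Fin.last n) (by omega) (by omega)
    exact hav _ k (Fin.last n) ⟨h1p.trans hpk, hl, h1, by omega⟩
  have z : (0 : Fin (n+1)).1 = 0 := rfl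
  rcases hor with hkn | hp1
  · left
    apply perm_eq_of_order
    intro i j hij
    rw [permA_lt _ _ _ _ hij]
    rcases lt_trichotomy j p with hj | hj | hj
    · have := hbef i j hij hj
      constructor
      · intro _; omega
      · intro _; exact this
    · subst hj
      have := hpmin i (by omega)
      omega
    · have hjk : j = k := by omega
      subst hjk
      by_cases hi : i = 0
      · subst hi; omega
      · by_cases hip : i = p
        · subst hip
          have := hpmin j (by omega)
          omega
        · have := hmid i (by omega) (by omega)
          omega
  · right
    apply perm_eq_of_order
    intro i j hij
    rw [permB_lt _ _ _ _ hij]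
    by_cases hi0 : i = 0
    · subst hi0
      by_cases hjp : j = p
      · subst hjp
        have := hpmin 0 (by omega)
        omega
      · by_cases hjk : j = k
        · subst hjk; omega
        · have := haft j (by omega) hjk
          omega
    · by_cases hip : i = p
      · subst hip
        have := hpmin j (by omega)
        omega
      · have hj := haft j (by omega) (by omega)
        by_cases hik : i = k
        · subst hik; omega
        · have hi := haft i (by omega) hik
          have h1 := hne i j hij
          have h2 : ¬ π j < π i := fun h => hav 0 i j ⟨by omega, hij, hi, h⟩
          omega

lemma permA_ne (n : ℕ) (hn : 3 ≤ n) : permA n (by omega) ≠ (permA n (by omega)).symm := by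
  intro h
  have := congrArg (fun σ : Equiv.Perm (Fin (n + 1)) => (σ ⟨0, by omega⟩).1) h
  simp [permA] at this
  omega

lemma permA_eq : permA 2 le_rfl = (permA 2 le_rfl).symm := by decide

lemma permA_zero (n : ℕ) (hn : 2 ≤ n) : permA n hn 0 ≠ 0 := by
  rw [Ne, Fin.ext_iff]; simp [permA]

lemma permB_zero (n : ℕ) (hn : 2 ≤ n) : (permA n hn).symm 0 ≠ 0 := by
  rw [Ne, Fin.ext_iff]; simp [permA]; omega

/-- Prepend a fixed point. -/
def ext0 {n : ℕ} (σ : Equiv.Perm (Fin n)) : Equiv.Perm (Fin (n + 1)) :=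
  Equiv.Perm.decomposeFin.symm (0, σ)

lemma ext0_zero {n : ℕ} (σ : Equiv.Perm (Fin n)) : ext0 σ 0 = 0 := by
  simp [ext0]

lemma ext0_succ {n : ℕ} (σ : Equiv.Perm (Fin n)) (i : Fin n) : ext0 σ i.succ = (σ i).succ := by
  simp [ext0]

lemma occ321_ext0 {n : ℕ} (σ : Equiv.Perm (Fin n)) (i j k : Fin n) :
    Occ321 (ext0 σ) i.succ j.succ k.succ ↔ Occ321 σ i j k := by
  simp [Occ321, ext0_succ]

lemma occ213_ext0 {n : ℕ} (σ : Equiv.Perm (Fin n)) (i j k : Fin n) :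
    Occ213 (ext0 σ) i.succ j.succ k.succ ↔ Occ213 σ i j k := by
  simp [Occ213, ext0_succ]

lemma occ_pos {n : ℕ} (σ : Equiv.Perm (Fin n)) (i j k : Fin (n + 1)) (h1 : i < j) (h2 : j < k)
    (h3 : ext0 σ j < ext0 σ i) : ∃ i' j' k' : Fin n, i = i'.succ ∧ j = j'.succ ∧ k = k'.succ := by
  have hi : i ≠ 0 := by
    rintro rfl
    rw [ext0_zero] at h3
    exact absurd h3 (Fin.not_lt_zero _)
  obtain ⟨i', rfl⟩ := Fin.exists_succ_eq.2 hi
  obtain ⟨j', rfl⟩ := Fin.exists_succ_eq.2 (Fin.ne_zero_of_lt h1)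
  obtain ⟨k', rfl⟩ := Fin.exists_succ_eq.2 (Fin.ne_zero_of_lt h2)
  exact ⟨i', j', k', rfl, rfl, rfl⟩

lemma good_ext0 {n : ℕ} (σ : Equiv.Perm (Fin n)) : Good (ext0 σ) ↔ Good σ := by
  constructor
  · rintro ⟨h1, i, j, k, ho, hu⟩
    obtain ⟨i, j, k, rfl, rfl, rfl⟩ := occ_pos σ i j k ho.1 ho.2.1 ho.2.2.1
    refine ⟨fun i j k h => h1 _ _ _ ((occ321_ext0 σ i j k).2 h), i, j, k,
      (occ213_ext0 σ i j k).1 ho, ?_⟩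
    intro i' j' k' h
    simpa using hu _ _ _ ((occ213_ext0 σ i' j' k').2 h)
  · rintro ⟨h1, i, j, k, ho, hu⟩
    refine ⟨?_, i.succ, j.succ, k.succ, (occ213_ext0 σ i j k).2 ho, ?_⟩
    · intro i j k h
      obtain ⟨i, j, k, rfl, rfl, rfl⟩ := occ_pos σ i j k h.1 h.2.1 h.2.2.1
      exact h1 _ _ _ ((occ321_ext0 σ i j k).1 h)
    · intro i j k h
      obtain ⟨i, j, k, rfl, rfl, rfl⟩ := occ_pos σ i j k h.1 h.2.1 h.2.2.1
      simpa using hu _ _ _ ((occ213_ext0 σ i j k).1 h)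

lemma ext0_injective {n : ℕ} : Function.Injective (ext0 : Equiv.Perm (Fin n) → _) := by
  intro a b h
  simpa [ext0] using h

lemma exists_ext0 {n : ℕ} (π : Equiv.Perm (Fin (n + 1))) (h : π 0 = 0) : ∃ σ, π = ext0 σ := by
  obtain ⟨⟨p, σ⟩, rfl⟩ := Equiv.Perm.decomposeFin.symm.surjective π
  rw [Equiv.Perm.decomposeFin_symm_apply_zero] at h
  subst h
  exact ⟨σ, rfl⟩

lemma good_set_succ (n : ℕ) (hn : 2 ≤ n) :
    {π : Equiv.Perm (Fin (n + 1)) | Good π} =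
      (ext0 '' {σ : Equiv.Perm (Fin n) | Good σ}) ∪ {permA n hn, (permA n hn).symm} := by
  ext π
  simp only [Set.mem_ofPred_eq, Set.mem_union, Set.mem_image, Set.mem_insert_iff,
    Set.mem_singleton_iff]
  constructor
  · intro h
    by_cases h0 : π 0 = 0
    · obtain ⟨σ, rfl⟩ := exists_ext0 π h0
      exact Or.inl ⟨σ, (good_ext0 σ).1 h, rfl⟩
    · exact Or.inr (good_classify n hn π h0 h)
  · rintro (⟨σ, h, rfl⟩ | rfl | rfl)
    · exact (good_ext0 σ).2 h
    · exact good_permA n hn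
    · exact good_permB n hn

lemma good_ncard_succ (n : ℕ) (hn : 2 ≤ n) :
    {π : Equiv.Perm (Fin (n + 1)) | Good π}.ncard =
      {σ : Equiv.Perm (Fin n) | Good σ}.ncard +
        ({permA n hn, (permA n hn).symm} : Set (Equiv.Perm (Fin (n + 1)))).ncard := by
  rw [good_set_succ n hn, Set.ncard_union_eq _ (Set.toFinite _) (Set.toFinite _),
    Set.ncard_image_of_injective _ ext0_injective]
  rw [Set.disjoint_left]
  rintro _ ⟨σ, _, rfl⟩ (h | h)
  · exact permA_zero n hn (h ▸ ext0_zero σ)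
  · exact permB_zero n hn (h ▸ ext0_zero σ)

lemma good_ncard (m : ℕ) : {π : Equiv.Perm (Fin (m + 3)) | Good π}.ncard = 2 * m + 1 := by
  induction m with
  | zero =>
    rw [good_ncard_succ 2 le_rfl]
    have : {σ : Equiv.Perm (Fin 2) | Good σ} = ∅ := by
      ext σ
      simp only [Set.mem_ofPred_eq, Set.mem_empty_iff_false, iff_false]
      rintro ⟨-, i, j, k, ⟨h1, h2, -⟩, -⟩
      omega
    rw [this, ← permA_eq]
    simp
  | succ m ih =>
    rw [good_ncard_succ (m + 3) (by omega), ih, Set.ncard_pair (permA_ne _ (by omega))]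
    ring

lemma main_321_213 (n : ℕ) (hn : 3 ≤ n) : sAvoidContain p321 p213 n = 2 * n - 5 := by
  obtain ⟨m, rfl⟩ := Nat.exists_eq_add_of_le' hn
  have h := good_ncard m
  have e : sAvoidContain p321 p213 (m + 3) = {π : Equiv.Perm (Fin (m + 3)) | Good π}.ncard := by
    unfold sAvoidContain
    simp only [avoids321_iff, once213_iff]
    rfl
  rw [e, h]
  omega

lemma occCount_compl {k n : ℕ} (α : Equiv.Perm (Fin k)) (π : Equiv.Perm (Fin n)) :
    occCount (α.trans Fin.revPerm) (π.trans Fin.revPerm) = occCount α π := by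
  unfold occCount
  apply Nat.card_congr
  apply Equiv.subtypeEquivRight
  intro f
  simp only [Equiv.trans_apply, Fin.revPerm_apply, Fin.rev_lt_rev]
  exact and_congr_right fun _ => forall_comm

lemma occCount_rev {k n : ℕ} (α : Equiv.Perm (Fin k)) (π : Equiv.Perm (Fin n)) :
    occCount (Fin.revPerm.trans α) (Fin.revPerm.trans π) = occCount α π := by
  unfold occCount
  apply Nat.card_congr
  refine Equiv.subtypeEquiv (Equiv.arrowCongr Fin.revPerm Fin.revPerm) ?_
  intro f
  simp only [Equiv.trans_apply, Fin.revPerm_apply, Equiv.arrowCongr_apply, Fin.revPerm_symm,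
    Function.comp_apply, Fin.rev_rev]
  apply and_congr
  · constructor
    · intro h a b hab
      simpa using h (Fin.rev_lt_rev.2 hab)
    · intro h a b hab
      simpa using h (Fin.rev_lt_rev.2 hab)
  · constructor
    · intro h a b
      simpa using h a.rev b.rev
    · intro h a b
      simpa using h a.rev b.rev

lemma s_compl (α β : Equiv.Perm (Fin 3)) (n : ℕ) :
    sAvoidContain (α.trans Fin.revPerm) (β.trans Fin.revPerm) n = sAvoidContain α β n := by
  unfold sAvoidContain
  symm
  apply Nat.card_congr
  refine Equiv.subtypeEquiv (Equiv.equivCongr (Equiv.refl _) Fin.revPerm) ?_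
  intro π
  have : Equiv.equivCongr (Equiv.refl _) Fin.revPerm π = π.trans Fin.revPerm := by ext; simp
  rw [this]
  simp only [avoids, containsOnce, occCount_compl]

lemma s_rev (α β : Equiv.Perm (Fin 3)) (n : ℕ) :
    sAvoidContain (Fin.revPerm.trans α) (Fin.revPerm.trans β) n = sAvoidContain α β n := by
  unfold sAvoidContain
  symm
  apply Nat.card_congr
  refine Equiv.subtypeEquiv (Equiv.equivCongr Fin.revPerm (Equiv.refl _)) ?_
  intro π
  have : Equiv.equivCongr Fin.revPerm (Equiv.refl _) π = Fin.revPerm.trans π := by ext; simp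
  rw [this]
  simp only [avoids, containsOnce, occCount_rev]

/-- Theorem 4.2: for each listed pair `(α,β)`, `s_n(α;β) = 2n−5` for `n ≥ 3`. -/
theorem sAvoidContain_eq_of_mem_classC :
    ∀ p ∈ [(p123, p231), (p123, p312), (p321, p132), (p321, p213)],
      ∀ n : ℕ, 3 ≤ n → sAvoidContain p.1 p.2 n = 2 * n - 5 := by
  have c1 : p321.trans Fin.revPerm = p123 := by decide
  have c2 : p213.trans Fin.revPerm = p231 := by decide
  have c3 : Fin.revPerm.trans p321 = p123 := by decide
  have c4 : Fin.revPerm.trans p213 = p312 := by decide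
  have c5 : Fin.revPerm.trans p123 = p321 := by decide
  have c6 : Fin.revPerm.trans p231 = p132 := by decide
  intro p hp n hn
  have h4 := main_321_213 n hn
  have h1 : sAvoidContain p123 p231 n = 2 * n - 5 := by
    rw [← c1, ← c2, s_compl, h4]
  have h2 : sAvoidContain p123 p312 n = 2 * n - 5 := by
    rw [← c3, ← c4, s_rev, h4]
  have h3 : sAvoidContain p321 p132 n = 2 * n - 5 := by
    rw [← c5, ← c6, s_rev, h1]
  simp only [List.mem_cons, List.not_mem_nil, or_false] at hp
  rcases hp with rfl | rfl | rfl | rfl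
  · exact h1
  · exact h2
  · exact h3
  · exact h4
end

section
/- For each ordered pair (α,β) in {(132,213), (213,132), (231,312), (312,231)} of patterns of length three, the number of permutations of {1,…,n} that avoid α and contain β exactly once satisfies s_n(α;β) = n·2^{n−5} for all n ≥ 4 (equivalently, 2^5·s_n(α;β) = n·2^n for n ≥ 4), and s_3(α;β) = 1. -/
namespace PermOcc

open Equiv

def o213 {n : ℕ} (π : Perm (Fin n)) (i j k : Fin n) : Prop :=
  i < j ∧ j < k ∧ π j < π i ∧ π i < π k

def o132 {n : ℕ} (π : Perm (Fin n)) (i j k : Fin n) : Prop :=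
  i < j ∧ j < k ∧ π i < π k ∧ π k < π j

def av132 {n : ℕ} (π : Perm (Fin n)) : Prop := ∀ i j k, ¬ o132 π i j k
def av213 {n : ℕ} (π : Perm (Fin n)) : Prop := ∀ i j k, ¬ o213 π i j k
def one213 {n : ℕ} (π : Perm (Fin n)) : Prop :=
  ∃ i j k, o213 π i j k ∧ ∀ i' j' k', o213 π i' j' k' → i' = i ∧ j' = j ∧ k' = k

def inA {n : ℕ} (π : Perm (Fin n)) : Prop := av132 π ∧ one213 π
def inB {n : ℕ} (π : Perm (Fin n)) : Prop := av132 π ∧ av213 π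
def inv0 {n : ℕ} (π : Perm (Fin (n + 1))) : Prop := ∃ j k, o213 π 0 j k

/-- Insert a first letter `p`. -/
noncomputable def ins {n : ℕ} (p : Fin (n + 1)) (σ : Perm (Fin n)) : Perm (Fin (n + 1)) :=
  Equiv.ofBijective (Fin.cons p (p.succAbove ∘ σ) : Fin (n + 1) → Fin (n + 1)) (by
    rw [← Finite.injective_iff_bijective, Fin.cons_injective_iff]
    refine ⟨?_, Fin.succAbove_right_injective.comp σ.injective⟩
    rintro ⟨i, hi⟩
    exact Fin.succAbove_ne _ _ hi)

@[simp] lemma ins_zero {n : ℕ} (p : Fin (n + 1)) (σ : Perm (Fin n)) : ins p σ 0 = p := by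
  simp [ins]

@[simp] lemma ins_succ {n : ℕ} (p : Fin (n + 1)) (σ : Perm (Fin n)) (i : Fin n) :
    ins p σ i.succ = p.succAbove (σ i) := by
  simp [ins]

lemma ins_bij (n : ℕ) :
    Function.Bijective (fun x : Fin (n + 1) × Perm (Fin n) => ins x.1 x.2) := by
  rw [Fintype.bijective_iff_injective_and_card]
  constructor
  · rintro ⟨p, σ⟩ ⟨q, τ⟩ h
    simp only at h
    have h0 : p = q := by simpa using DFunLike.congr_fun h 0
    subst h0
    have : σ = τ := by
      ext i
      have := DFunLike.congr_fun h i.succ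
      simp only [ins_succ] at this
      rw [Fin.succAbove_right_injective this]
    rw [this]
  · simp [Fintype.card_perm, Nat.factorial_succ]

lemma sum_ins {n : ℕ} (f : Perm (Fin (n + 1)) → ℕ) :
    ∑ π, f π = ∑ σ : Perm (Fin n), ∑ p : Fin (n + 1), f (ins p σ) := by
  rw [← (Equiv.ofBijective _ (ins_bij n)).sum_comp, Fintype.sum_prod_type_right]
  rfl

section
variable {n : ℕ} (p : Fin (n + 1)) (σ : Perm (Fin n)) (i j k : Fin n)

@[simp] lemma o213_sss : o213 (ins p σ) i.succ j.succ k.succ ↔ o213 σ i j k := by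
  simp [o213]
@[simp] lemma o132_sss : o132 (ins p σ) i.succ j.succ k.succ ↔ o132 σ i j k := by
  simp [o132]
@[simp] lemma o213_zss : o213 (ins p σ) 0 i.succ j.succ ↔
    i < j ∧ (σ i).castSucc < p ∧ p ≤ (σ j).castSucc := by
  simp [o213, Fin.succAbove_lt_iff_castSucc_lt, Fin.lt_succAbove_iff_le_castSucc]
@[simp] lemma o132_zss : o132 (ins p σ) 0 i.succ j.succ ↔
    i < j ∧ p ≤ (σ j).castSucc ∧ σ j < σ i := by
  simp [o132, Fin.lt_succAbove_iff_le_castSucc]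
@[simp] lemma o213_m (a b : Fin (n + 1)) (π : Perm (Fin (n + 1))) : ¬ o213 π a 0 b := by
  simp [o213]
@[simp] lemma o213_r (a b : Fin (n + 1)) (π : Perm (Fin (n + 1))) : ¬ o213 π a b 0 := by
  simp [o213]
@[simp] lemma o132_m (a b : Fin (n + 1)) (π : Perm (Fin (n + 1))) : ¬ o132 π a 0 b := by
  simp [o132]
@[simp] lemma o132_r (a b : Fin (n + 1)) (π : Perm (Fin (n + 1))) : ¬ o132 π a b 0 := by
  simp [o132]

lemma av132_ins : av132 (ins p σ) ↔
    av132 σ ∧ ∀ i j, ¬ (i < j ∧ p ≤ (σ j).castSucc ∧ σ j < σ i) := by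
  unfold av132
  simp only [Fin.forall_fin_succ (P := fun _ => _), o132_m, o132_r, o132_sss, o132_zss, not_false_eq_true, true_and,
    implies_true]
  tauto

lemma av213_ins : av213 (ins p σ) ↔
    av213 σ ∧ ∀ i j, ¬ (i < j ∧ (σ i).castSucc < p ∧ p ≤ (σ j).castSucc) := by
  unfold av213
  simp only [Fin.forall_fin_succ (P := fun _ => _), o213_m, o213_r, o213_sss, o213_zss, not_false_eq_true, true_and,
    implies_true]
  tauto

lemma inv0_ins : inv0 (ins p σ) ↔
    ∃ i j, (i < j ∧ (σ i).castSucc < p ∧ p ≤ (σ j).castSucc) := by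
  unfold inv0
  simp only [Fin.exists_fin_succ (P := fun _ => _), o213_m, o213_r, o213_zss, false_or,
    exists_false]

lemma one_ins_not (h : ¬ inv0 (ins p σ)) : one213 (ins p σ) ↔ one213 σ := by
  have h' : ∀ i j, ¬ o213 (ins p σ) 0 i j := by simpa [inv0] using h
  unfold one213
  simp only [Fin.exists_fin_succ (P := fun _ => _), Fin.forall_fin_succ (P := fun _ => _), o213_m, o213_r, o213_sss, h',
    false_and, exists_false, false_or, Fin.succ_inj, false_imp_iff, implies_true, true_and]

lemma one_ins_inv (h : inv0 (ins p σ)) : one213 (ins p σ) ↔ av213 σ ∧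
    ∃ i j, (i < j ∧ (σ i).castSucc < p ∧ p ≤ (σ j).castSucc) ∧
    ∀ i' j', (i' < j' ∧ (σ i').castSucc < p ∧ p ≤ (σ j').castSucc) → i' = i ∧ j' = j := by
  obtain ⟨a, b, hab⟩ := (inv0_ins p σ).1 h
  rw [← o213_zss] at hab
  simp only [← o213_zss]
  constructor
  · rintro ⟨i, j, k, h1, h2⟩
    obtain ⟨rfl, rfl, rfl⟩ := h2 _ _ _ hab
    refine ⟨fun i j k hh => ?_, a, b, hab, fun i' j' hh => ?_⟩
    · have := (h2 _ _ _ ((o213_sss p σ i j k).2 hh)).1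
      exact absurd this (Fin.succ_ne_zero _)
    · simpa using h2 _ _ _ hh
  · rintro ⟨h1, i, j, h2, h3⟩
    refine ⟨0, _, _, h2, ?_⟩
    simp only [Fin.forall_fin_succ (P := fun _ => _), o213_m, o213_r, o213_sss, false_imp_iff, implies_true,
      true_and, Fin.succ_inj]
    exact ⟨fun i' j' hh => h3 _ _ hh, fun i j k hh => absurd hh (h1 i j k)⟩

end

lemma pos_val {n : ℕ} {i : Fin (n + 1)} (h : i ≠ 0) : 0 < i.val :=
  Nat.pos_of_ne_zero fun h' => h (Fin.ext h')

lemma surj_val {n : ℕ} (σ : Perm (Fin n)) (v : ℕ) (hv : v < n) : ∃ j, (σ j).val = v :=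
  ⟨σ.symm ⟨v, hv⟩, by simp⟩

/-- possible first letters not creating new 213 or 132 -/
lemma good_p {n : ℕ} (p : Fin (n + 2)) (σ : Perm (Fin (n + 1)))
    (h1 : ∀ i j, ¬ (i < j ∧ p ≤ (σ j).castSucc ∧ σ j < σ i))
    (h2 : ∀ i j, ¬ (i < j ∧ (σ i).castSucc < p ∧ p ≤ (σ j).castSucc)) :
    p = Fin.last _ ∨ p = (σ 0).castSucc := by
  by_contra! hc
  obtain ⟨hc1, hc2⟩ := hc
  have hp : p.val < n + 1 := by
    have := Fin.val_ne_of_ne hc1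
    simp at this; omega
  obtain ⟨j, hj⟩ := surj_val σ p hp
  have hc2' := Fin.val_ne_of_ne hc2
  have hj0 : j ≠ 0 := by rintro rfl; simp at hc2'; omega
  have := h1 0 j
  have := h2 0 j
  have := pos_val hj0
  have z : ((0 : Fin (n + 1)) : ℕ) = 0 := rfl
  simp only [Fin.lt_def, Fin.le_def, Fin.val_castSucc] at *
  omega

lemma inB_ins {n : ℕ} (p : Fin (n + 2)) (σ : Perm (Fin (n + 1))) :
    inB (ins p σ) ↔ inB σ ∧ (p = Fin.last _ ∨ p = (σ 0).castSucc) := by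
  unfold inB
  rw [av132_ins, av213_ins]
  constructor
  · rintro ⟨⟨h1, h2⟩, h3, h4⟩
    exact ⟨⟨h1, h3⟩, good_p p σ h2 h4⟩
  · rintro ⟨⟨h1, h2⟩, rfl | rfl⟩
    · refine ⟨⟨h1, fun i j => ?_⟩, h2, fun i j => ?_⟩
      · rintro ⟨-, h, -⟩
        simp only [Fin.le_def, Fin.val_castSucc, Fin.val_last] at h; omega
      · rintro ⟨-, -, h⟩
        simp only [Fin.le_def, Fin.val_castSucc, Fin.val_last] at h; omega
    · refine ⟨⟨h1, fun i j => ?_⟩, h2, fun i j => ?_⟩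
      · rintro ⟨a, b, c⟩
        simp at b
        have hj : σ 0 ≠ σ j := fun h => by have := σ.injective h; subst this; simp at a
        have hi : 0 < i := Fin.pos_iff_ne_zero.2 (by
          rintro rfl; exact absurd c (not_lt.2 b))
        exact h1 0 i j ⟨hi, a, lt_of_le_of_ne b hj, c⟩
      · rintro ⟨a, b, c⟩
        simp at b c
        have hj : σ 0 ≠ σ j := fun h => by have := σ.injective h; subst this; simp at a
        have hi : 0 < i := Fin.pos_iff_ne_zero.2 (by
          rintro rfl; simp at b)
        exact h2 0 i j ⟨hi, a, b, lt_of_le_of_ne c hj⟩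

lemma inA_ins_not {n : ℕ} (p : Fin (n + 2)) (σ : Perm (Fin (n + 1))) :
    (inA (ins p σ) ∧ ¬ inv0 (ins p σ)) ↔
      inA σ ∧ (p = Fin.last _ ∨ (p = (σ 0).castSucc ∧ ¬ inv0 σ)) := by
  unfold inA
  constructor
  · rintro ⟨⟨h1, h2⟩, h3⟩
    rw [one_ins_not p σ h3] at h2
    rw [av132_ins] at h1
    rw [inv0_ins] at h3
    push Not at h3
    refine ⟨⟨h1.1, h2⟩, ?_⟩
    rcases good_p p σ h1.2 (by rintro i j ⟨a, b, c⟩; exact absurd c (not_le.2 (h3 i j a b))) with h | h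
    · exact Or.inl h
    · refine Or.inr ⟨h, ?_⟩
      rintro ⟨j, k, a, b, c, d⟩
      subst h
      have := h3 j k b (by simpa using c)
      simp at this
      exact absurd this (not_lt.2 d.le)
  · rintro ⟨⟨h1, h2⟩, rfl | ⟨rfl, h3⟩⟩
    · have h3 : ¬ inv0 (ins (Fin.last (n + 1)) σ) := by
        rw [inv0_ins]
        rintro ⟨i, j, -, -, h⟩
        simp only [Fin.le_def, Fin.val_castSucc, Fin.val_last] at h; omega
      refine ⟨⟨?_, (one_ins_not _ _ h3).2 h2⟩, h3⟩
      rw [av132_ins]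
      refine ⟨h1, fun i j => ?_⟩
      rintro ⟨-, h, -⟩
      simp only [Fin.le_def, Fin.val_castSucc, Fin.val_last] at h; omega
    · have h3 : ¬ inv0 (ins (σ 0).castSucc σ) := by
        rw [inv0_ins]
        rintro ⟨i, j, a, b, c⟩
        simp at b c
        have hj : σ 0 ≠ σ j := fun h => by have := σ.injective h; subst this; simp at a
        have hi : 0 < i := Fin.pos_iff_ne_zero.2 (by
          rintro rfl; simp at b)
        exact h3 ⟨i, j, hi, a, b, lt_of_le_of_ne c hj⟩
      refine ⟨⟨?_, (one_ins_not _ _ h3).2 h2⟩, h3⟩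
      rw [av132_ins]
      refine ⟨h1, fun i j => ?_⟩
      rintro ⟨a, b, c⟩
      simp at b
      have hj : σ 0 ≠ σ j := fun h => by have := σ.injective h; subst this; simp at a
      have hi : 0 < i := Fin.pos_iff_ne_zero.2 (by
        rintro rfl; exact absurd c (not_lt.2 b))
      exact h1 0 i j ⟨hi, a, lt_of_le_of_ne b hj, c⟩

lemma inC_ins {n : ℕ} (p : Fin (n + 2)) (σ : Perm (Fin (n + 1))) :
    (inA (ins p σ) ∧ inv0 (ins p σ)) ↔ inB σ ∧ p.val = n ∧ (σ 0).val + 1 = n := by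
  unfold inA
  constructor
  · rintro ⟨⟨h1, h2⟩, h3⟩
    rw [one_ins_inv p σ h3] at h2
    rw [av132_ins] at h1
    obtain ⟨h1, h4⟩ := h1
    obtain ⟨h2, i, j, ⟨hij, hip, hpj⟩, hu⟩ := h2
    refine ⟨⟨h1, h2⟩, ?_⟩
    simp only [Fin.lt_def, Fin.le_def, Fin.val_castSucc] at *
    have hinj : ∀ a b, (σ a).val = (σ b).val → a = b := fun a b h => σ.injective (Fin.ext h)
    have hi : i = 0 := by
      by_contra hi
      have hi' : 0 < i.val := pos_val hi
      have hij' : ((0 : Fin (n + 1)) : ℕ) < j.val := lt_trans hi' hij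
      by_cases h0 : (σ 0).val < p.val
      · exact hi (hu 0 j ⟨hij', h0, hpj⟩).1.symm
      · have := h4 0 j
        have h5 := h2 0 i j
        unfold o213 at h5
        simp only [Fin.lt_def, Fin.val_zero] at *
        have h6 : (σ 0).val ≠ (σ j).val := fun h => by have := hinj _ _ h; subst this; simp at hij
        have z : ((0 : Fin (n + 1)) : ℕ) = 0 := rfl
        omega
    subst hi
    simp at hij
    have hj0 := (σ j).isLt
    have hp : p.val = n := by
      obtain ⟨a, ha⟩ := surj_val σ p.val (by omega)
      obtain ⟨b, hb⟩ := surj_val σ n (by omega)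
      have pos : ∀ a, p.val ≤ (σ a).val → 0 < a.val := by
        intro a h
        rcases Nat.eq_zero_or_pos a.val with h' | h'
        · have : a = 0 := Fin.ext h'
          subst this; omega
        · exact h'
      have e1 := (hu 0 a ⟨by simpa using pos a (by omega), hip, by omega⟩).2
      have e2 := (hu 0 b ⟨by simpa using pos b (by omega), hip, by omega⟩).2
      subst e1; subst e2; omega
    refine ⟨hp, ?_⟩
    obtain ⟨m, hm⟩ := surj_val σ (n - 1) (by omega)
    have hmj : m.val ≠ j.val := by
      intro h
      have := Fin.ext h; subst this; omega
    by_cases hm0 : m = 0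
    · subst hm0; omega
    · have hm1 : 0 < m.val := pos_val hm0
      rcases lt_or_gt_of_ne hmj with h | h
      · exact absurd (hu m j ⟨h, by omega, hpj⟩).1 hm0
      · have h5 := h1 0 j m
        unfold o132 at h5
        have h6 : (σ 0).val ≠ (σ m).val := fun h => hm0 (hinj _ _ h).symm
        simp only [Fin.lt_def, Fin.val_zero] at *
        have z : ((0 : Fin (n + 1)) : ℕ) = 0 := rfl
        omega
  · rintro ⟨⟨h1, h2⟩, hp, h0⟩
    have hinj : ∀ a b, (σ a).val = (σ b).val → a = b := fun a b h => σ.injective (Fin.ext h)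
    obtain ⟨j, hj⟩ := surj_val σ n (by omega)
    have hj0 : 0 < j.val := by
      rcases Nat.eq_zero_or_pos j.val with h' | h'
      · have : j = 0 := Fin.ext h'
        subst this; omega
      · exact h'
    have key : (0 : Fin (n+1)) < j ∧ (σ 0).castSucc < p ∧ p ≤ (σ j).castSucc := by
      simp only [Fin.lt_def, Fin.le_def, Fin.val_castSucc, Fin.val_zero]; omega
    have h3 : inv0 (ins p σ) := by
      rw [inv0_ins]
      exact ⟨0, j, key⟩
    refine ⟨⟨?_, ?_⟩, h3⟩
    · rw [av132_ins]
      refine ⟨h1, fun i j => ?_⟩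
      simp only [Fin.lt_def, Fin.le_def, Fin.val_castSucc]
      omega
    · rw [one_ins_inv p σ h3]
      refine ⟨h2, 0, j, key, ?_⟩
      intro i' j' hh
      have hjj : j' = j := by
        apply hinj
        simp only [Fin.lt_def, Fin.le_def, Fin.val_castSucc] at hh
        omega
      subst hjj
      refine ⟨?_, rfl⟩
      by_contra hi
      have hi' : 0 < i'.val := pos_val hi
      have h5 := h2 0 i' j'
      have h6 : (σ 0).val ≠ (σ i').val := fun h => hi (hinj _ _ h).symm
      unfold o213 at h5
      simp only [Fin.lt_def, Fin.le_def, Fin.val_castSucc] at h5 hh key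
      have z : ((0 : Fin (n + 1)) : ℕ) = 0 := rfl
      omega

open Classical in
noncomputable def ct {n : ℕ} (P : Perm (Fin n) → Prop) : ℕ := ∑ σ, if P σ then 1 else 0

lemma ct_zero_B : ct (n := 0) inB = 1 := by
  simp [ct, inB, av132, av213]

lemma ct_one_B : ct (n := 1) inB = 1 := by
  have : ∀ σ : Perm (Fin 1), inB σ := by
    intro σ
    simp [inB, av132, av213, o132, o213]
  simp [ct, this]

lemma ct_B (n : ℕ) : ct (n := n + 2) inB = 2 * ct (n := n + 1) inB := by
  classical
  unfold ct
  rw [sum_ins, Finset.mul_sum]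
  refine Finset.sum_congr rfl fun σ _ => ?_
  simp only [inB_ins]
  by_cases h : inB σ
  · have hne : Fin.last (n+1) ≠ (σ 0).castSucc := (Fin.castSucc_lt_last _).ne'
    simp only [h, true_and, if_true]
    rw [← Finset.card_filter, Finset.filter_or, Finset.filter_eq', Finset.filter_eq']
    simp [Finset.card_pair hne]
  · simp [h]

lemma ct_A' (n : ℕ) : ct (n := n + 2) (fun π => inA π ∧ ¬ inv0 π)
    + ct (n := n + 1) (fun π => inA π ∧ inv0 π) = 2 * ct (n := n + 1) inA := by
  classical
  unfold ct
  rw [sum_ins, Finset.mul_sum, ← Finset.sum_add_distrib]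
  refine Finset.sum_congr rfl fun σ _ => ?_
  simp only [inA_ins_not]
  by_cases h : inA σ
  · have hne : Fin.last (n+1) ≠ (σ 0).castSucc := (Fin.castSucc_lt_last _).ne'
    by_cases h' : inv0 σ
    · simp [h, h']
    · simp only [h, h', true_and, if_true, not_false_eq_true, and_true]
      rw [← Finset.card_filter, Finset.filter_or, Finset.filter_eq', Finset.filter_eq']
      simp [Finset.card_pair hne]
  · simp [h]

lemma ct_A (n : ℕ) : ct (n := n + 1) inA = ct (n := n + 1) (fun π => inA π ∧ ¬ inv0 π)
    + ct (n := n + 1) (fun π => inA π ∧ inv0 π) := by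
  classical
  unfold ct
  rw [← Finset.sum_add_distrib]
  refine Finset.sum_congr rfl fun σ _ => ?_
  by_cases h : inA σ <;> by_cases h' : inv0 σ <;> simp [h, h']

lemma ct_C (n : ℕ) : ct (n := n + 2) (fun π => inA π ∧ inv0 π)
    = ct (n := n + 1) (fun σ => inB σ ∧ (σ 0).val + 1 = n) := by
  classical
  unfold ct
  rw [sum_ins]
  refine Finset.sum_congr rfl fun σ _ => ?_
  simp only [inC_ins]
  by_cases h : inB σ ∧ (σ 0).val + 1 = n
  · have : ∀ p : Fin (n + 2), p.val = n ↔ p = (Fin.last n).castSucc := by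
      intro p; simp [Fin.ext_iff]
    simp [h, this]
  · have : ∀ p : Fin (n + 2), ¬ (inB σ ∧ p.val = n ∧ (σ 0).val + 1 = n) := by tauto
    simp [h, this]

lemma ct_E (n : ℕ) : ct (n := n + 2) (fun σ => inB σ ∧ (σ 0).val + 1 = n + 1)
    = ct (n := n + 1) (fun σ => inB σ ∧ (σ 0).val = n) := by
  classical
  unfold ct
  rw [sum_ins]
  refine Finset.sum_congr rfl fun σ _ => ?_
  simp only [inB_ins, ins_zero]
  by_cases h : inB σ ∧ (σ 0).val = n
  · have : ∀ p : Fin (n + 2), ((inB σ ∧ (p = Fin.last _ ∨ p = (σ 0).castSucc)) ∧ p.val + 1 = n + 1) ↔ p = (Fin.last n).castSucc := by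
      intro p; simp [Fin.ext_iff, h]; omega
    simp only [this]; simp [h]
  · have : ∀ p : Fin (n + 2), ¬ ((inB σ ∧ (p = Fin.last _ ∨ p = (σ 0).castSucc)) ∧ p.val + 1 = n + 1) := by
      rintro p ⟨⟨h1, h2⟩, h3⟩
      refine h ⟨h1, ?_⟩
      simp [Fin.ext_iff] at h2
      omega
    simp only [this, h, if_false, Finset.sum_const_zero]

lemma ct_D (n : ℕ) : ct (n := n + 1) (fun σ => inB σ ∧ (σ 0).val = n) = ct (n := n) inB := by
  classical
  unfold ct
  rw [sum_ins]
  refine Finset.sum_congr rfl fun σ _ => ?_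
  have e : ∀ p : Fin (n + 1), (inB (ins p σ) ∧ (ins p σ 0).val = n) ↔ inB σ ∧ p = Fin.last n := by
    intro p
    rw [ins_zero]
    have : p.val = n ↔ p = Fin.last n := by simp [Fin.ext_iff]
    rw [this]
    refine and_congr_left ?_
    rintro rfl
    unfold inB
    rw [av132_ins, av213_ins]
    have : ∀ i, ¬ (Fin.last n ≤ (σ i).castSucc) := by
      intro i; simp [Fin.le_def]
    simp [this]
  simp only [e]
  by_cases h : inB σ <;> simp [h]

lemma b_val (n : ℕ) : ct (n := n + 1) inB = 2 ^ n := by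
  induction n with
  | zero => simpa using ct_one_B
  | succ n ih => rw [ct_B, ih]; ring

lemma c_val (n : ℕ) : ct (n := n + 3) (fun π => inA π ∧ inv0 π) = ct (n := n) inB := by
  rw [ct_C (n + 1), ct_E, ct_D]

lemma no_one {n : ℕ} (hn : n ≤ 2) (σ : Perm (Fin n)) : ¬ one213 σ := by
  rintro ⟨i, j, k, ⟨h1, h2, -⟩, -⟩
  simp only [Fin.lt_def] at h1 h2
  omega

lemma a3 : ct (n := 3) inA = 1 := by
  have h1 := ct_A 2
  have h2 := ct_A' 1
  have h3 := c_val 0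
  have h4 : ct (n := 2) inA = 0 := by
    simp [ct, inA, no_one (le_refl 2)]
  rw [ct_zero_B] at h3
  simp at h1 h2 h3
  omega

lemma a4 : ct (n := 4) inA = 2 := by
  have h1 := ct_A 3
  have h2 := ct_A' 2
  have h3 := c_val 0
  have h4 := c_val 1
  have h5 := a3
  rw [ct_zero_B] at h3
  rw [ct_one_B] at h4
  simp at h1 h2 h3 h4
  omega

lemma a_val (n : ℕ) : 2 * ct (n := n + 4) inA = (n + 4) * 2 ^ n := by
  induction n with
  | zero => have := a4; simp at this ⊢; omega
  | succ n ih =>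
    have h1 : ct (n := n + 5) inA = ct (n := n + 5) (fun π => inA π ∧ ¬ inv0 π)
      + ct (n := n + 5) (fun π => inA π ∧ inv0 π) := ct_A (n + 4)
    have h2 : ct (n := n + 5) (fun π => inA π ∧ ¬ inv0 π)
      + ct (n := n + 4) (fun π => inA π ∧ inv0 π) = 2 * ct (n := n + 4) inA := ct_A' (n + 3)
    have h3 : ct (n := n + 4) (fun π => inA π ∧ inv0 π) = 2 ^ n :=
      (c_val (n + 1)).trans (b_val n)
    have h4 : ct (n := n + 5) (fun π => inA π ∧ inv0 π) = 2 * 2 ^ n :=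
      ((c_val (n + 2)).trans (b_val (n + 1))).trans (by ring)
    have e2 : (n + 1 + 4) * 2 ^ (n + 1) = 2 * ((n + 4) * 2 ^ n) + 2 * 2 ^ n := by ring
    rw [e2]
    change 2 * ct (n := n + 5) inA = _
    omega

/-! ### Link with occurrence counts -/

lemma occ_213 {n : ℕ} (π : Perm (Fin n)) (f : Fin 3 → Fin n) :
    (StrictMono f ∧ ∀ a b : Fin 3, p213 a < p213 b ↔ π (f a) < π (f b)) ↔
      o213 π (f 0) (f 1) (f 2) := by
  have hm : StrictMono f ↔ f 0 < f 1 ∧ f 1 < f 2 := by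
    rw [Fin.strictMono_iff_lt_succ]; simp [Fin.forall_fin_succ]
  rw [hm]
  simp [Fin.forall_fin_succ, p213, o213]
  grind

lemma occ_132 {n : ℕ} (π : Perm (Fin n)) (f : Fin 3 → Fin n) :
    (StrictMono f ∧ ∀ a b : Fin 3, p132 a < p132 b ↔ π (f a) < π (f b)) ↔
      o132 π (f 0) (f 1) (f 2) := by
  have hm : StrictMono f ↔ f 0 < f 1 ∧ f 1 < f 2 := by
    rw [Fin.strictMono_iff_lt_succ]; simp [Fin.forall_fin_succ]
  rw [hm]
  simp [Fin.forall_fin_succ, p132, o132]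
  grind

lemma avoids_iff {n : ℕ} (π : Perm (Fin n)) : avoids p132 π ↔ av132 π := by
  unfold avoids occCount av132
  simp only [occ_132]
  rw [Finite.card_eq_zero_iff, isEmpty_subtype]
  constructor
  · intro h i j k; simpa using h ![i, j, k]
  · intro h f; exact h _ _ _

lemma once_iff {n : ℕ} (π : Perm (Fin n)) : containsOnce p213 π ↔ one213 π := by
  unfold containsOnce occCount one213
  simp only [occ_213]
  rw [Nat.card_eq_one_iff_exists]
  constructor
  · rintro ⟨⟨f, hf⟩, h⟩
    refine ⟨f 0, f 1, f 2, hf, fun i j k hh => ?_⟩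
    have := h ⟨![i, j, k], by simpa using hh⟩
    have := congrArg Subtype.val this
    simp only at this
    subst this
    simp
  · rintro ⟨i, j, k, h1, h2⟩
    refine ⟨⟨![i, j, k], by simpa using h1⟩, ?_⟩
    rintro ⟨f, hf⟩
    obtain ⟨a, b, c⟩ := h2 _ _ _ hf
    apply Subtype.ext
    funext x
    fin_cases x <;> simp [a, b, c]

lemma s_eq (n : ℕ) : sAvoidContain p132 p213 n = ct (n := n) inA := by
  classical
  unfold sAvoidContain ct
  simp only [avoids_iff, once_iff]
  rw [Nat.card_eq_fintype_card, Fintype.card_subtype, Finset.card_filter]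
  refine Finset.sum_congr rfl fun σ _ => ?_
  simp only [inA]
  congr

/-! ### Symmetries -/

lemma occ_compl {k n : ℕ} (α : Perm (Fin k)) (π : Perm (Fin n)) :
    occCount (Fin.revPerm * α) (Fin.revPerm * π) = occCount α π := by
  unfold occCount
  refine Nat.card_congr (Equiv.subtypeEquivRight fun f => and_congr_right fun _ => ?_)
  simp only [Perm.mul_apply, Fin.revPerm_apply, Fin.rev_lt_rev]
  exact forall_comm

lemma occ_rev {k n : ℕ} (α : Perm (Fin k)) (π : Perm (Fin n)) :
    occCount (α * Fin.revPerm) (π * Fin.revPerm) = occCount α π := by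
  unfold occCount
  refine Nat.card_congr ((Equiv.arrowCongr Fin.revPerm Fin.revPerm).subtypeEquiv fun f => ?_)
  refine and_congr ?_ ?_
  · simp only [StrictMono, Equiv.arrowCongr_apply, Function.comp, Fin.revPerm_symm, Fin.revPerm_apply, Fin.rev_lt_rev]
    constructor
    · intro h a b hab; exact h (Fin.rev_lt_rev.2 hab)
    · intro h a b hab
      simpa using h (Fin.rev_lt_rev.2 hab)
  · simp only [Perm.mul_apply, Equiv.arrowCongr_apply, Function.comp, Fin.revPerm_symm, Fin.revPerm_apply]
    constructor
    · intro h a b; simpa using h a.rev b.rev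
    · intro h a b; simpa using h a.rev b.rev

lemma s_compl (α β : Perm (Fin 3)) (n : ℕ) :
    sAvoidContain (Fin.revPerm * α) (Fin.revPerm * β) n = sAvoidContain α β n := by
  unfold sAvoidContain
  refine (Nat.card_congr ((Equiv.mulLeft Fin.revPerm).subtypeEquiv fun π => ?_)).symm
  simp [avoids, containsOnce, occ_compl]

lemma s_rev (α β : Perm (Fin 3)) (n : ℕ) :
    sAvoidContain (α * Fin.revPerm) (β * Fin.revPerm) n = sAvoidContain α β n := by
  unfold sAvoidContain
  refine (Nat.card_congr ((Equiv.mulRight Fin.revPerm).subtypeEquiv fun π => ?_)).symm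
  simp [avoids, containsOnce, occ_rev]

lemma main132 : (∀ n : ℕ, 4 ≤ n → 2 ^ 5 * sAvoidContain p132 p213 n = n * 2 ^ n) ∧
    sAvoidContain p132 p213 3 = 1 := by
  refine ⟨fun n hn => ?_, by rw [s_eq, a3]⟩
  obtain ⟨m, rfl⟩ := Nat.exists_eq_add_of_le' hn
  rw [s_eq]
  have := a_val m
  calc 2 ^ 5 * ct (n := m + 4) inA = 2 ^ 4 * (2 * ct (n := m + 4) inA) := by ring
    _ = _ := by rw [this]; ring

end PermOcc

/-- Theorem 4.3: for each listed pair `(α,β)`, `s_n(α;β) = n·2^{n−5}` for `n ≥ 4`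
(stated in the equivalent truncation-free form `2⁵·s_n(α;β) = n·2ⁿ`), and `s_3(α;β) = 1`. -/
theorem sAvoidContain_eq_of_mem_classD :
    ∀ p ∈ [(p132, p213), (p213, p132), (p231, p312), (p312, p231)],
      (∀ n : ℕ, 4 ≤ n → 2 ^ 5 * sAvoidContain p.1 p.2 n = n * 2 ^ n) ∧
        sAvoidContain p.1 p.2 3 = 1 := by
  intro p hp
  have e1 : p231 = p132 * Fin.revPerm := by decide
  have e2 : p312 = p213 * Fin.revPerm := by decide
  have e3 : p312 = Fin.revPerm * p132 := by decide
  have e4 : p231 = Fin.revPerm * p213 := by decide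
  have e5 : p213 = Fin.revPerm * p231 := by decide
  have e6 : p132 = Fin.revPerm * p312 := by decide
  have h2 : ∀ n, sAvoidContain p231 p312 n = sAvoidContain p132 p213 n := fun n => by
    rw [e1, e2, PermOcc.s_rev]
  have h3 : ∀ n, sAvoidContain p312 p231 n = sAvoidContain p132 p213 n := fun n => by
    rw [e3, e4, PermOcc.s_compl]
  have h1 : ∀ n, sAvoidContain p213 p132 n = sAvoidContain p132 p213 n := fun n => by
    rw [← h2, ← PermOcc.s_compl p231 p312, ← e5, ← e6]
  have hm := PermOcc.main132
  simp only [List.mem_cons, List.not_mem_nil, or_false] at hp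
  rcases hp with rfl | rfl | rfl | rfl
  · exact hm
  · simpa only [h1] using hm
  · simpa only [h2] using hm
  · simpa only [h3] using hm
end

section
/- For every n ≥ 6 there is no permutation of {1,…,n} that avoids the pattern 123 and contains the pattern 321 exactly once, and likewise no permutation that avoids 321 and contains 123 exactly once; that is, s_n(123;321) = s_n(321;123) = 0 for n ≥ 6. -/
/-- Erdős–Szekeres for five values: no increasing triple forces a decreasing triple. -/
theorem es5 {α : Type*} [LinearOrder α] (g : Fin 5 → α) (hg : Function.Injective g)
    (h : ∀ i j k : Fin 5, i < j → j < k → ¬ (g i < g j ∧ g j < g k)) :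
    ∃ i j k : Fin 5, i < j ∧ j < k ∧ g k < g j ∧ g j < g i := by
  by_contra hc
  push Not at hc
  have inc : ∀ i j k : Fin 5, i < j → j < k → g i < g j → g k < g j := fun i j k hij hjk hlt =>
    lt_of_le_of_ne (not_lt.1 fun h' => h i j k hij hjk ⟨hlt, h'⟩)
      (fun e => hjk.ne' (hg e))
  have dec : ∀ i j k : Fin 5, i < j → j < k → g j < g i → g j < g k := fun i j k hij hjk hlt =>
    lt_of_le_of_ne (not_lt.1 fun h' => absurd hlt (not_lt.2 (hc i j k hij hjk h')))
      (fun e => hjk.ne (hg e))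
  have tot : ∀ i j : Fin 5, i < j → g i < g j ∨ g j < g i := fun i j hij =>
    lt_or_gt_of_ne (fun e => hij.ne (hg e))
  have i012 := inc 0 1 2 (by decide) (by decide)
  have i013 := inc 0 1 3 (by decide) (by decide)
  have i014 := inc 0 1 4 (by decide) (by decide)
  have i023 := inc 0 2 3 (by decide) (by decide)
  have i024 := inc 0 2 4 (by decide) (by decide)
  have i034 := inc 0 3 4 (by decide) (by decide)
  have i123 := inc 1 2 3 (by decide) (by decide)
  have i124 := inc 1 2 4 (by decide) (by decide)
  have i134 := inc 1 3 4 (by decide) (by decide)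
  have i234 := inc 2 3 4 (by decide) (by decide)
  have d012 := dec 0 1 2 (by decide) (by decide)
  have d013 := dec 0 1 3 (by decide) (by decide)
  have d014 := dec 0 1 4 (by decide) (by decide)
  have d023 := dec 0 2 3 (by decide) (by decide)
  have d024 := dec 0 2 4 (by decide) (by decide)
  have d034 := dec 0 3 4 (by decide) (by decide)
  have d123 := dec 1 2 3 (by decide) (by decide)
  have d124 := dec 1 2 4 (by decide) (by decide)
  have d134 := dec 1 3 4 (by decide) (by decide)
  have d234 := dec 2 3 4 (by decide) (by decide)
  have t01 := tot 0 1 (by decide)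
  have t12 := tot 1 2 (by decide)
  have t23 := tot 2 3 (by decide)
  have t34 := tot 3 4 (by decide)
  have t02 := tot 0 2 (by decide)
  have t13 := tot 1 3 (by decide)
  have t24 := tot 2 4 (by decide)
  clear inc dec tot h hc hg
  generalize g 0 = a at *
  generalize g 1 = b at *
  generalize g 2 = c at *
  generalize g 3 = d at *
  generalize g 4 = e at *
  grind

/-- Six values with no increasing triple have two different decreasing triples. -/
theorem es6 {α : Type*} [LinearOrder α] {n : ℕ} (hn : 6 ≤ n) (g : Fin n → α)
    (hg : Function.Injective g)
    (h : ∀ i j k : Fin n, i < j → j < k → ¬ (g i < g j ∧ g j < g k)) :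
    ∃ i j k i' j' k' : Fin n, (i < j ∧ j < k ∧ g k < g j ∧ g j < g i) ∧
      (i' < j' ∧ j' < k' ∧ g k' < g j' ∧ g j' < g i') ∧ ¬ (i = i' ∧ j = j' ∧ k = k') := by
  have key : ∀ s : Fin 6, ∃ i j k : Fin 6, (i < j ∧ j < k ∧
      g (Fin.castLE hn k) < g (Fin.castLE hn j) ∧ g (Fin.castLE hn j) < g (Fin.castLE hn i)) ∧
      i ≠ s ∧ j ≠ s ∧ k ≠ s := by
    intro s
    obtain ⟨i, j, k, hij, hjk, h1, h2⟩ := es5 (fun x : Fin 5 => g (Fin.castLE hn (s.succAbove x)))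
      (hg.comp ((Fin.castLE_injective hn).comp Fin.succAbove_right_injective))
      (fun i j k hij hjk => h _ _ _ (Fin.strictMono_castLE hn (Fin.strictMono_succAbove s hij))
        (Fin.strictMono_castLE hn (Fin.strictMono_succAbove s hjk)))
    exact ⟨_, _, _, ⟨Fin.strictMono_succAbove s hij, Fin.strictMono_succAbove s hjk, h1, h2⟩,
      Fin.succAbove_ne _ _, Fin.succAbove_ne _ _, Fin.succAbove_ne _ _⟩
  obtain ⟨i, j, k, ⟨h1, h2, h3, h4⟩, -⟩ := key 5
  obtain ⟨i', j', k', ⟨h1', h2', h3', h4'⟩, hi, -⟩ := key i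
  exact ⟨_, _, _, _, _, _, ⟨Fin.strictMono_castLE hn h1, Fin.strictMono_castLE hn h2, h3, h4⟩,
    ⟨Fin.strictMono_castLE hn h1', Fin.strictMono_castLE hn h2', h3', h4'⟩,
    fun hh => hi (Fin.castLE_injective hn hh.1).symm⟩

theorem strictMono_triple {n : ℕ} {i j k : Fin n} (hij : i < j) (hjk : j < k) :
    StrictMono ![i, j, k] := by
  intro a b hab
  have hik := hij.trans hjk
  fin_cases a <;> fin_cases b <;> simp_all

theorem occ123 {n : ℕ} (π : Equiv.Perm (Fin n)) {i j k : Fin n}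
    (h1 : π i < π j) (h2 : π j < π k) :
    ∀ a b : Fin 3, p123 a < p123 b ↔ π (![i, j, k] a) < π (![i, j, k] b) := by
  have h3 := h1.trans h2
  intro a b
  fin_cases a <;> fin_cases b <;> simp [p123, h1, h2, h3, h1.le, h2.le, h3.le]

theorem occ321 {n : ℕ} (π : Equiv.Perm (Fin n)) {i j k : Fin n}
    (h1 : π k < π j) (h2 : π j < π i) :
    ∀ a b : Fin 3, p321 a < p321 b ↔ π (![i, j, k] a) < π (![i, j, k] b) := by
  have h3 := h1.trans h2
  intro a b
  fin_cases a <;> fin_cases b <;> simp [p321, h1, h2, h3, h1.le, h2.le, h3.le]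

theorem avoids_elim {n : ℕ} {α : Equiv.Perm (Fin 3)} {π : Equiv.Perm (Fin n)} (h : avoids α π)
    (f : Fin 3 → Fin n) (hf : StrictMono f)
    (hf' : ∀ a b : Fin 3, α a < α b ↔ π (f a) < π (f b)) : False := by
  rw [avoids, occCount, Finite.card_eq_zero_iff] at h
  exact h.false ⟨f, hf, hf'⟩

theorem once_elim {n : ℕ} {α : Equiv.Perm (Fin 3)} {π : Equiv.Perm (Fin n)}
    (h : containsOnce α π) (f g : Fin 3 → Fin n) (hf : StrictMono f)
    (hf' : ∀ a b : Fin 3, α a < α b ↔ π (f a) < π (f b)) (hg : StrictMono g)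
    (hg' : ∀ a b : Fin 3, α a < α b ↔ π (g a) < π (g b)) : f = g := by
  rw [containsOnce, occCount, Nat.card_eq_one_iff_unique] at h
  have := h.1
  exact congrArg Subtype.val (Subsingleton.elim
    (⟨f, hf, hf'⟩ : {f : Fin 3 → Fin n // StrictMono f ∧
      ∀ a b : Fin 3, α a < α b ↔ π (f a) < π (f b)}) ⟨g, hg, hg'⟩)

/-- `s_n(123;321) = s_n(321;123) = 0` for `n ≥ 6`. -/
theorem sAvoidContain_123_321_eq_zero :
    ∀ n : ℕ, 6 ≤ n →
      sAvoidContain p123 p321 n = 0 ∧ sAvoidContain p321 p123 n = 0 := by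
  intro n hn
  constructor
  · rw [sAvoidContain, Finite.card_eq_zero_iff]
    refine ⟨fun ⟨π, ha, hc⟩ => ?_⟩
    obtain ⟨i, j, k, i', j', k', ⟨h1, h2, h3, h4⟩, ⟨h1', h2', h3', h4'⟩, hne⟩ :=
      es6 hn π π.injective (fun i j k hij hjk hh =>
        avoids_elim ha _ (strictMono_triple hij hjk) (occ123 π hh.1 hh.2))
    have e := once_elim hc _ _ (strictMono_triple h1 h2) (occ321 π h3 h4)
      (strictMono_triple h1' h2') (occ321 π h3' h4')
    exact hne ⟨congrFun e 0, congrFun e 1, congrFun e 2⟩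
  · rw [sAvoidContain, Finite.card_eq_zero_iff]
    refine ⟨fun ⟨π, ha, hc⟩ => ?_⟩
    obtain ⟨i, j, k, i', j', k', ⟨h1, h2, h3, h4⟩, ⟨h1', h2', h3', h4'⟩, hne⟩ :=
      es6 (α := (Fin n)ᵒᵈ) hn (fun x => OrderDual.toDual (π x))
        (fun x y hxy => π.injective (OrderDual.toDual.injective hxy)) (fun i j k hij hjk hh =>
        avoids_elim ha _ (strictMono_triple hij hjk)
          (occ321 π (OrderDual.toDual_lt_toDual.1 hh.2) (OrderDual.toDual_lt_toDual.1 hh.1)))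
    rw [OrderDual.toDual_lt_toDual] at h3 h4 h3' h4'
    have e := once_elim hc _ _ (strictMono_triple h1 h2) (occ123 π h4 h3)
      (strictMono_triple h1' h2') (occ123 π h4' h3')
    exact hne ⟨congrFun e 0, congrFun e 1, congrFun e 2⟩
end

section
/- For each unordered pair {α,β} in {{123,132}, {123,213}, {231,321}, {312,321}} of patterns of length three, and for every n ≥ 5, the number of permutations of {1,…,n} that contain α exactly once and contain β exactly once is s_n(∅;{α,β}) = (n−3)(n−4)·2^{n−5}. -/
def T123 {n : ℕ} (π : Equiv.Perm (Fin n)) : ℕ :=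
  ∑ i, ∑ j, ∑ k, if (i < j ∧ j < k) ∧ π i < π j ∧ π j < π k then 1 else 0

def T132 {n : ℕ} (π : Equiv.Perm (Fin n)) : ℕ :=
  ∑ i, ∑ j, ∑ k, if (i < j ∧ j < k) ∧ π i < π k ∧ π k < π j then 1 else 0

lemma occ_eq_sum {n : ℕ} (α : Equiv.Perm (Fin 3)) (π : Equiv.Perm (Fin n))
    (Q : Fin n → Fin n → Fin n → Prop) [∀ i j k, Decidable (Q i j k)]
    (hQ : ∀ i j k, ((∀ a b : Fin 3, α a < α b ↔ π (![i,j,k] a) < π (![i,j,k] b)) ↔ Q i j k)) :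
    occCount α π = ∑ i, ∑ j, ∑ k, if (i < j ∧ j < k) ∧ Q i j k then 1 else 0 := by
  have e : {f : Fin 3 → Fin n // StrictMono f ∧ ∀ a b : Fin 3, α a < α b ↔ π (f a) < π (f b)} ≃
      {t : Fin n × Fin n × Fin n // (t.1 < t.2.1 ∧ t.2.1 < t.2.2) ∧ Q t.1 t.2.1 t.2.2} :=
    { toFun := fun f => ⟨(f.1 0, f.1 1, f.1 2), by
        obtain ⟨f, hf, h⟩ := f
        refine ⟨⟨hf (by decide), hf (by decide)⟩, ?_⟩
        rw [← hQ]
        have : ![f 0, f 1, f 2] = f := by ext i; fin_cases i <;> rfl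
        simpa [this] using h⟩
      invFun := fun t => ⟨![t.1.1, t.1.2.1, t.1.2.2], by
        obtain ⟨⟨i, j, k⟩, ⟨h1, h2⟩, h3⟩ := t
        refine ⟨?_, (hQ i j k).2 h3⟩
        rw [Fin.strictMono_iff_lt_succ]
        intro a
        fin_cases a
        · exact h1
        · exact h2⟩
      left_inv := by
        rintro ⟨f, hf⟩
        apply Subtype.ext
        funext i; fin_cases i <;> rfl
      right_inv := by
        rintro ⟨⟨i, j, k⟩, h⟩
        rfl }
  unfold occCount
  rw [Nat.card_congr e, Nat.card_eq_fintype_card, Fintype.card_subtype, Finset.card_filter,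
    Fintype.sum_prod_type]
  simp_rw [Fintype.sum_prod_type]

lemma occ123_s6 {n : ℕ} (π : Equiv.Perm (Fin n)) : occCount p123 π = T123 π := by
  apply occ_eq_sum
  intro i j k
  constructor
  · intro h
    exact ⟨(h 0 1).1 (by decide), (h 1 2).1 (by decide)⟩
  · rintro ⟨h1, h2⟩ a b
    fin_cases a <;> fin_cases b <;> simp [p123] <;> order

lemma occ132 {n : ℕ} (π : Equiv.Perm (Fin n)) : occCount p132 π = T132 π := by
  apply occ_eq_sum
  intro i j k
  constructor
  · intro h
    exact ⟨(h 0 2).1 (by decide), (h 2 1).1 (by decide)⟩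
  · rintro ⟨h1, h2⟩ a b
    fin_cases a <;> fin_cases b <;> simp [p132] <;> order

lemma occ_comp {n : ℕ} (α : Equiv.Perm (Fin 3)) (π : Equiv.Perm (Fin n)) :
    occCount (α.trans Fin.revPerm) (π.trans Fin.revPerm) = occCount α π := by
  unfold occCount
  apply Nat.card_congr
  apply Equiv.subtypeEquivRight
  intro f
  simp only [Equiv.trans_apply, Fin.revPerm_apply, Fin.rev_lt_rev]
  exact and_congr_right fun _ => forall_comm

lemma occ_rev {n : ℕ} (α : Equiv.Perm (Fin 3)) (π : Equiv.Perm (Fin n)) :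
    occCount (Fin.revPerm.trans α) (Fin.revPerm.trans π) = occCount α π := by
  unfold occCount
  apply Nat.card_congr
  refine Equiv.subtypeEquiv (Equiv.arrowCongr Fin.revPerm Fin.revPerm) ?_
  intro f
  have key : ∀ a, (Equiv.arrowCongr Fin.revPerm Fin.revPerm f) a = Fin.rev (f (Fin.rev a)) := by
    intro a; rfl
  simp only [StrictMono, key, Equiv.trans_apply, Fin.revPerm_apply, Fin.rev_lt_rev]
  constructor
  · rintro ⟨h1, h2⟩
    refine ⟨fun a b h => h1 (by simpa using h), fun a b => ?_⟩
    simpa using h2 (Fin.rev a) (Fin.rev b)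
  · rintro ⟨h1, h2⟩
    refine ⟨fun a b h => ?_, fun a b => ?_⟩
    · simpa using h1 (a := Fin.rev b) (b := Fin.rev a) (by simpa using h)
    · simpa using h2 (Fin.rev a) (Fin.rev b)

lemma sCB_comp (α β : Equiv.Perm (Fin 3)) (n : ℕ) :
    sContainBoth (α.trans Fin.revPerm) (β.trans Fin.revPerm) n = sContainBoth α β n := by
  unfold sContainBoth
  symm
  apply Nat.card_congr
  refine Equiv.subtypeEquiv (Equiv.equivCongr (Equiv.refl _) Fin.revPerm) ?_
  intro π
  have : (Equiv.equivCongr (Equiv.refl _) Fin.revPerm) π = π.trans Fin.revPerm := rfl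
  simp only [containsOnce, this, occ_comp]

lemma sCB_rev (α β : Equiv.Perm (Fin 3)) (n : ℕ) :
    sContainBoth (Fin.revPerm.trans α) (Fin.revPerm.trans β) n = sContainBoth α β n := by
  unfold sContainBoth
  symm
  apply Nat.card_congr
  refine Equiv.subtypeEquiv (Equiv.equivCongr Fin.revPerm (Equiv.refl _)) ?_
  intro π
  have : (Equiv.equivCongr Fin.revPerm (Equiv.refl _)) π = Fin.revPerm.trans π := rfl
  simp only [containsOnce, this, occ_rev]

lemma sCB_symm (α β : Equiv.Perm (Fin 3)) (n : ℕ) :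
    sContainBoth α β n = sContainBoth β α n := by
  unfold sContainBoth
  simp only [and_comm]

/-- Insert a new minimum at position `p`. -/
def ins {n : ℕ} (p : Fin (n + 1)) (τ : Equiv.Perm (Fin n)) : Equiv.Perm (Fin (n + 1)) :=
  (finSuccEquiv' p).trans ((Equiv.optionCongr τ).trans (finSuccEquiv' 0).symm)

@[simp] lemma ins_self {n : ℕ} (p : Fin (n + 1)) (τ : Equiv.Perm (Fin n)) : ins p τ p = 0 := by
  simp [ins]

@[simp] lemma ins_succAbove {n : ℕ} (p : Fin (n + 1)) (τ : Equiv.Perm (Fin n)) (x : Fin n) :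
    ins p τ (p.succAbove x) = (τ x).succ := by
  simp [ins]

lemma ins_bij (n : ℕ) : Function.Bijective
    (fun q : Fin (n + 1) × Equiv.Perm (Fin n) => ins q.1 q.2) := by
  rw [Fintype.bijective_iff_injective_and_card]
  constructor
  · rintro ⟨p, τ⟩ ⟨q, ρ⟩ h
    simp only at h
    have hpq : p = q := by
      apply (ins p τ).injective
      rw [ins_self, h, ins_self]
    subst hpq
    congr 1
    ext x
    have := congrArg (fun f => f (p.succAbove x)) h
    simp at this
    rw [this]
  · simp [Fintype.card_perm, Nat.factorial_succ]

lemma card_ins {n : ℕ} (Q : Equiv.Perm (Fin (n + 1)) → Prop) [DecidablePred Q] :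
    (Finset.univ.filter Q).card =
      ∑ p, (Finset.univ.filter (fun τ : Equiv.Perm (Fin n) => Q (ins p τ))).card := by
  rw [Finset.card_filter]
  rw [← (ins_bij n).sum_comp (fun σ => if Q σ then 1 else 0)]
  rw [Fintype.sum_prod_type]
  simp_rw [Finset.card_filter]

def PA {n : ℕ} (p : Fin (n + 1)) (τ : Equiv.Perm (Fin n)) : ℕ :=
  ∑ x, ∑ y, if (p ≤ x.castSucc ∧ x < y) ∧ τ x < τ y then 1 else 0

def PD {n : ℕ} (p : Fin (n + 1)) (τ : Equiv.Perm (Fin n)) : ℕ :=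
  ∑ x, ∑ y, if (p ≤ x.castSucc ∧ x < y) ∧ τ y < τ x then 1 else 0

lemma T123_ins {n : ℕ} (p : Fin (n + 1)) (τ : Equiv.Perm (Fin n)) :
    T123 (ins p τ) = T123 τ + PA p τ := by
  unfold T123 PA
  simp [Fin.sum_univ_succAbove _ p, Fin.lt_succAbove_iff_le_castSucc]
  exact add_comm _ _

lemma T132_ins {n : ℕ} (p : Fin (n + 1)) (τ : Equiv.Perm (Fin n)) :
    T132 (ins p τ) = T132 τ + PD p τ := by
  unfold T132 PD
  simp [Fin.sum_univ_succAbove _ p, Fin.lt_succAbove_iff_le_castSucc]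
  exact add_comm _ _

lemma PA0 {m : ℕ} (τ : Equiv.Perm (Fin (m+2))) : PA (Fin.last _) τ = 0 := by
  unfold PA
  simp only [Finset.sum_eq_zero_iff]
  intro x _ y _
  rw [if_neg]
  simp only [Fin.lt_def, Fin.le_def]; simp; try omega

lemma PD0 {m : ℕ} (τ : Equiv.Perm (Fin (m+2))) : PD (Fin.last _) τ = 0 := by
  unfold PD
  simp only [Finset.sum_eq_zero_iff]
  intro x _ y _
  rw [if_neg]
  simp only [Fin.lt_def, Fin.le_def]; simp; try omega

lemma PA1 {m : ℕ} (τ : Equiv.Perm (Fin (m+2))) : PA (Fin.last _).castSucc τ = 0 := by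
  unfold PA
  simp only [Finset.sum_eq_zero_iff]
  intro x _ y _
  rw [if_neg]
  simp only [Fin.lt_def, Fin.le_def]; simp; try omega

lemma PD1 {m : ℕ} (τ : Equiv.Perm (Fin (m+2))) : PD (Fin.last _).castSucc τ = 0 := by
  unfold PD
  simp only [Finset.sum_eq_zero_iff]
  intro x _ y _
  rw [if_neg]
  simp only [Fin.lt_def, Fin.le_def]; simp; try omega

/-- Do the last two entries ascend? -/
def St {m : ℕ} (τ : Equiv.Perm (Fin (m + 2))) : Prop :=
  τ (Fin.last m).castSucc < τ (Fin.last (m + 1))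

instance {m : ℕ} (τ : Equiv.Perm (Fin (m + 2))) : Decidable (St τ) := by
  unfold St; infer_instance

lemma pair_iff {m : ℕ} (x y : Fin (m + 2)) :
    ((Fin.last m).castSucc.castSucc ≤ x.castSucc ∧ x < y) ↔
      (x = (Fin.last m).castSucc ∧ y = Fin.last (m+1)) := by
  simp only [Fin.ext_iff, Fin.lt_def, Fin.le_def]; simp; try omega

lemma PA2 {m : ℕ} (τ : Equiv.Perm (Fin (m+2))) :
    PA (Fin.last m).castSucc.castSucc τ = if St τ then 1 else 0 := by
  unfold PA
  simp only [pair_iff]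
  rw [Finset.sum_eq_single (Fin.last m).castSucc, Finset.sum_eq_single (Fin.last (m+1))]
  · simp [St]
  · intro y _ h; simp [h]
  · simp
  · intro x _ h; simp [h]
  · simp

lemma PD2 {m : ℕ} (τ : Equiv.Perm (Fin (m+2))) :
    PD (Fin.last m).castSucc.castSucc τ = if St τ then 0 else 1 := by
  have hne : τ (Fin.last m).castSucc ≠ τ (Fin.last (m + 1)) := by
    intro h
    have := τ.injective h
    simp [Fin.ext_iff] at this
  unfold PD
  simp only [pair_iff]
  rw [Finset.sum_eq_single (Fin.last m).castSucc, Finset.sum_eq_single (Fin.last (m+1))]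
  · simp only [and_self, true_and]
    rcases lt_or_gt_of_ne hne with h | h
    · have hS : St τ := h
      rw [if_neg h.not_gt, if_pos hS]
    · have hS : ¬ St τ := h.not_gt
      rw [if_pos h, if_neg hS]
  · intro y _ h; simp [h]
  · simp
  · intro x _ h; simp [h]
  · simp

lemma P3 {m : ℕ} (i : Fin m) (τ : Equiv.Perm (Fin (m+2))) :
    3 ≤ PA i.castSucc.castSucc.castSucc τ + PD i.castSucc.castSucc.castSucc τ := by
  obtain _ | m := m
  · exact i.elim0
  have h : PA i.castSucc.castSucc.castSucc τ + PD i.castSucc.castSucc.castSucc τ =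
      ∑ q : Fin (m+1+2) × Fin (m+1+2),
        if (i.castSucc.castSucc.castSucc ≤ q.1.castSucc ∧ q.1 < q.2) then 1 else 0 := by
    unfold PA PD
    rw [Fintype.sum_prod_type, ← Finset.sum_add_distrib]
    refine Finset.sum_congr rfl fun x _ => ?_
    rw [← Finset.sum_add_distrib]
    refine Finset.sum_congr rfl fun y _ => ?_
    by_cases hxy : x = y
    · simp [hxy]
    · have : τ x ≠ τ y := fun h => hxy (τ.injective h)
      rcases lt_or_gt_of_ne this with h | h
      · simp [h, h.not_gt]
      · simp [h, h.not_gt]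
  rw [h, ← Finset.card_filter]
  let a : Fin (m+1+2) := ⟨m, by omega⟩
  let b : Fin (m+1+2) := ⟨m+1, by omega⟩
  let c : Fin (m+1+2) := ⟨m+2, by omega⟩
  have hs : ({(a,b),(a,c),(b,c)} : Finset (Fin (m+1+2) × Fin (m+1+2))).card = 3 := by
    rw [Finset.card_eq_three]
    exact ⟨(a,b),(a,c),(b,c), by simp [b, c], by simp [a, b], by simp [a, b], rfl⟩
  rw [← hs]
  apply Finset.card_le_card
  intro q hq
  have := i.2
  simp only [Finset.mem_insert, Finset.mem_singleton] at hq
  rcases hq with rfl | rfl | rfl <;> simp [a, b, c, Fin.le_def] <;> omega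

lemma St0 {m : ℕ} (τ : Equiv.Perm (Fin (m+2))) : ¬ St (m := m+1) (ins (Fin.last _) τ) := by
  simp [St]

lemma St1 {m : ℕ} (τ : Equiv.Perm (Fin (m+2))) :
    St (m := m+1) (ins (Fin.last _).castSucc τ) := by
  unfold St
  have : Fin.last (m+1+1) = (Fin.last (m+1)).castSucc.succAbove (Fin.last _) := by
    simp [Fin.succAbove_of_le_castSucc]
  rw [ins_self, this, ins_succAbove]
  exact Fin.succ_pos _

lemma St2 {m : ℕ} (τ : Equiv.Perm (Fin (m+2))) :
    St (m := m+1) (ins (Fin.last m).castSucc.castSucc τ) ↔ St τ := by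
  unfold St
  have h1 : Fin.last (m+1+1) = (Fin.last m).castSucc.castSucc.succAbove (Fin.last _) := by
    rw [Fin.succAbove_of_le_castSucc] <;> simp [Fin.le_def]
  have h2 : (Fin.last (m+1)).castSucc =
      (Fin.last m).castSucc.castSucc.succAbove (Fin.last m).castSucc := by
    rw [Fin.succAbove_of_le_castSucc] <;> simp [Fin.ext_iff]
  rw [h1, h2, ins_succAbove, ins_succAbove, Fin.succ_lt_succ_iff]

def NA (m a b : ℕ) : ℕ := (Finset.univ.filter
  (fun τ : Equiv.Perm (Fin (m+2)) => T123 τ = a ∧ T132 τ = b ∧ St τ)).card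
def ND (m a b : ℕ) : ℕ := (Finset.univ.filter
  (fun τ : Equiv.Perm (Fin (m+2)) => T123 τ = a ∧ T132 τ = b ∧ ¬ St τ)).card
def NN (m a b : ℕ) : ℕ := (Finset.univ.filter
  (fun τ : Equiv.Perm (Fin (m+2)) => T123 τ = a ∧ T132 τ = b)).card

lemma NN_eq (m a b : ℕ) : NN m a b = NA m a b + ND m a b := by
  unfold NN NA ND
  rw [← Finset.card_filter_add_card_filter_not (p := fun τ => St τ)]
  simp only [Finset.filter_filter, and_assoc]

lemma NA_rec (m a b : ℕ) (ha : a ≤ 1) (hb : b ≤ 1) :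
    NA (m+1) a b = NN m a b + (if a = 1 then NA m 0 b else 0) := by
  unfold NA NN
  rw [card_ins]
  simp only [T123_ins, T132_ins]
  rw [Fin.sum_univ_castSucc, Fin.sum_univ_castSucc, Fin.sum_univ_castSucc]
  rw [Finset.sum_eq_zero]
  · simp only [PA0, PD0, PA1, PD1, PA2, PD2, St0, St1, St2]
    have : ∀ τ : Equiv.Perm (Fin (m+2)),
      (T123 τ + (if St τ then 1 else 0) = a ∧ T132 τ + (if St τ then 0 else 1) = b ∧ St τ) ↔
       (a = 1 ∧ T123 τ = 0 ∧ T132 τ = b ∧ St τ) := by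
      intro τ
      by_cases h : St τ <;> simp [h]
      omega
    simp only [this]
    split_ifs with h <;> simp [h, add_comm]
  · intro i _
    rw [Finset.card_eq_zero, Finset.filter_eq_empty_iff]
    intro τ _ h
    have := P3 i τ
    omega

lemma ND_rec (m a b : ℕ) (ha : a ≤ 1) (hb : b ≤ 1) :
    ND (m+1) a b = NN m a b + (if b = 1 then ND m a 0 else 0) := by
  unfold ND NN
  rw [card_ins]
  simp only [T123_ins, T132_ins]
  rw [Fin.sum_univ_castSucc, Fin.sum_univ_castSucc, Fin.sum_univ_castSucc]
  rw [Finset.sum_eq_zero]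
  · simp only [PA0, PD0, PA1, PD1, PA2, PD2, St0, St1, St2]
    have : ∀ τ : Equiv.Perm (Fin (m+2)),
      (T123 τ + (if St τ then 1 else 0) = a ∧ T132 τ + (if St τ then 0 else 1) = b ∧ ¬ St τ) ↔
       (b = 1 ∧ T123 τ = a ∧ T132 τ = 0 ∧ ¬ St τ) := by
      intro τ
      by_cases h : St τ <;> simp [h]
      omega
    simp only [this]
    split_ifs with h <;> simp [h, add_comm]
  · intro i _
    rw [Finset.card_eq_zero, Finset.filter_eq_empty_iff]
    intro τ _ h
    have := P3 i τ
    omega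

lemma base : NA 0 0 0 = 1 ∧ ND 0 0 0 = 1 ∧ NA 0 1 0 = 0 ∧ ND 0 1 0 = 0 ∧ NA 0 0 1 = 0 ∧
    ND 0 0 1 = 0 ∧ NA 0 1 1 = 0 ∧ ND 0 1 1 = 0 := by
  decide

lemma closed (k : ℕ) : NA (k+1) 0 0 = 2 * 2^k ∧ ND (k+1) 0 0 = 2 * 2^k ∧
    2 * NA (k+1) 1 0 = k * 2^k + 2 * 2^k ∧ 2 * ND (k+1) 1 0 = k * 2^k ∧
    2 * NA (k+1) 0 1 = k * 2^k ∧ 2 * ND (k+1) 0 1 = k * 2^k + 2 * 2^k ∧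
    4 * NN (k+1) 1 1 + k * 2^k = k^2 * 2^k := by
  obtain ⟨b1, b2, b3, b4, b5, b6, b7, b8⟩ := base
  induction k with
  | zero => simp [NA_rec, ND_rec, NN_eq, *]
  | succ k ih =>
    obtain ⟨h1, h2, h3, h4, h5, h6, h7⟩ := ih
    rw [NN_eq (k+1+1), NA_rec (k+1) 0 0, ND_rec (k+1) 0 0, NA_rec (k+1) 0 1, ND_rec (k+1) 0 1,
      NA_rec (k+1) 1 0, ND_rec (k+1) 1 0, NA_rec (k+1) 1 1, ND_rec (k+1) 1 1]
    · simp only [NN_eq (k+1) 0 0, NN_eq (k+1) 1 0, NN_eq (k+1) 0 1, pow_succ 2 k]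
      simp only [if_true, if_false, zero_ne_one]
      rw [NN_eq] at h7 ⊢
      refine ⟨?_, ?_, ?_, ?_, ?_, ?_, ?_⟩ <;> linarith
    all_goals norm_num

lemma main123 (n : ℕ) (hn : 5 ≤ n) :
    sContainBoth p123 p132 n = (n - 3) * (n - 4) * 2 ^ (n - 5) := by
  obtain ⟨k, rfl⟩ := Nat.exists_eq_add_of_le' hn
  have h : sContainBoth p123 p132 (k+5) = NN (k+2+1) 1 1 := by
    unfold sContainBoth containsOnce NN
    simp only [occ123_s6, occ132]
    rw [Nat.card_eq_fintype_card, Fintype.card_subtype]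
  have h7 := (closed (k+2)).2.2.2.2.2.2
  rw [h]
  have e1 : k + 5 - 3 = k + 2 := by omega
  have e2 : k + 5 - 4 = k + 1 := by omega
  have e3 : k + 5 - 5 = k := by omega
  rw [e1, e2, e3]
  rw [pow_add 2 k 2] at h7
  nlinarith

/-- Theorem 5.1: for each listed pair `{α,β}`, `s_n(∅;{α,β}) = (n−3)(n−4)·2^{n−5}`
for `n ≥ 5`. -/
theorem sContainBoth_eq_of_mem_classH :
    ∀ p ∈ [(p123, p132), (p123, p213), (p231, p321), (p312, p321)],
      ∀ n : ℕ, 5 ≤ n → sContainBoth p.1 p.2 n = (n - 3) * (n - 4) * 2 ^ (n - 5) := by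
  intro p hp n hn
  have m := main123 n hn
  have r1 : p321 = Fin.revPerm.trans p123 := by decide
  have r2 : p231 = Fin.revPerm.trans p132 := by decide
  have r3 : p321 = p123.trans Fin.revPerm := by decide
  have r4 : p312 = p132.trans Fin.revPerm := by decide
  have r5 : p123 = p321.trans Fin.revPerm := by decide
  have r6 : p213 = p231.trans Fin.revPerm := by decide
  have m2 : sContainBoth p321 p231 n = (n - 3) * (n - 4) * 2 ^ (n - 5) := by
    rw [r1, r2, sCB_rev, m]
  simp only [List.mem_cons, List.not_mem_nil, or_false] at hp
  rcases hp with rfl | rfl | rfl | rfl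
  · exact m
  · show sContainBoth p123 p213 n = _
    rw [r5, r6, sCB_comp, m2]
  · show sContainBoth p231 p321 n = _
    rw [sCB_symm, m2]
  · show sContainBoth p312 p321 n = _
    rw [sCB_symm, r3, r4, sCB_comp, m]
end
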